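/- arXiv:1503.07955 — 3 statements merged into one kernel-verified Lean document; each statement's English description precedes it below -/
import Mathlib

section
/- Theorem 3.4 (supercritical regime for r = 0: the limit is the shifted-mean LUE kernel with m sources). Fix an integer m ≥ 1, b > 1, and σ₁,…,σ_m > 0. For each N > m take a_j = σ_j b/(b−1) for 1 ≤ j ≤ m and a_k = bN for m+1 ≤ k ≤ N in the kernel K_N. Then for all ξ, η > 0, lim_{N→∞} e^{(1−1/b)(η−ξ)} (1−1/b) K_N((1−1/b)ξ, (1−1/b)η) = (1/(2πi)) (η^{ν₀}/Γ(ν₀+1)²) ∫₀^∞ ∮_{C′} ₀F₁(ν₀+1;−uξ) ₀F₁(ν₀+1;−vη) u^{ν₀} e^{−u+v} (u−v)^{−1} ∏_{j=1}^m ((u+σ_j)/(v+σ_j)) dv du, where C′ is any counterclockwise circle contained in {Re v < 0} enclosing −σ₁,…,−σ_m. -/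
open MeasureTheory Filter Topology

noncomputable section


/-- Pochhammer symbol `(a)_j` over `ℝ`. -/
def poch (a : ℝ) (j : ℕ) : ℝ := ∏ i ∈ Finset.range j, (a + i)

/-- The hypergeometric function `₀F₁(b; z)` for complex argument `z`. -/
def hyp0F1 (b : ℝ) (z : ℂ) : ℂ :=
  ∑' k : ℕ, (Real.Gamma b : ℂ) * z ^ k /
    ((Nat.factorial k : ℂ) * (Real.Gamma (b + k) : ℂ))

/-- The hypergeometric function `₀F₁(b; z)` for real argument `z`. -/
def hyp0F1R (b z : ℝ) : ℝ :=
  ∑' k : ℕ, Real.Gamma b * z ^ k / (Nat.factorial k * Real.Gamma (b + k))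

/-- The terminating hypergeometric sum `₁F₁(-k; b; u)`. -/
def hyp1F1T (k : ℕ) (b u : ℝ) : ℝ :=
  ∑ j ∈ Finset.range (k + 1),
    poch (-(k : ℝ)) j / (poch b j * Nat.factorial j) * u ^ j

/-- The function `Ψ(u;x)` of the paper. -/
def Psi (r ν0 : ℕ) (ν : Fin r → ℕ) (u x : ℝ) : ℝ :=
  (1 / Real.Gamma ((ν0 : ℝ) + 1)) *
    ∑' k : ℕ, x ^ k / Nat.factorial k * hyp1F1T k ((ν0 : ℝ) + 1) u *
      ∏ l, 1 / Real.Gamma ((ν l : ℝ) + 1 + k)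

/-- The positive orthant in `ℝ^r`. -/
def posOrth (r : ℕ) : Set (Fin r → ℝ) := {t | ∀ i, 0 < t i}

/-- The function `Φ(v;y)` of the paper, complex `v`. -/
def Phi (r ν0 : ℕ) (ν : Fin r → ℕ) (v : ℂ) (y : ℝ) : ℂ :=
  ((1 / Real.Gamma ((ν0 : ℝ) + 1) : ℝ) : ℂ) *
    ∫ t in posOrth r,
      (((∏ i, (t i) ^ ((ν i : ℝ) - 1) * Real.exp (-t i)) *
          (y / ∏ i, t i) ^ ν0 * Real.exp (-(y / ∏ i, t i)) : ℝ) : ℂ) *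
        hyp0F1 ((ν0 : ℝ) + 1) (-(v * ((y / ∏ i, t i : ℝ) : ℂ)))

/-- The function `Φ(v;y)` of the paper, real `v`. -/
def PhiR (r ν0 : ℕ) (ν : Fin r → ℕ) (v y : ℝ) : ℝ :=
  (1 / Real.Gamma ((ν0 : ℝ) + 1)) *
    ∫ t in posOrth r,
      ((∏ i, (t i) ^ ((ν i : ℝ) - 1) * Real.exp (-t i)) *
          (y / ∏ i, t i) ^ ν0 * Real.exp (-(y / ∏ i, t i))) *
        hyp0F1R ((ν0 : ℝ) + 1) (-(v * (y / ∏ i, t i)))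

/-- The double-contour-integral correlation kernel `K_N(x,y)` of Proposition 2.1,
with `C` the counterclockwise circle of center `c` and radius `R`. -/
def KN (r ν0 N : ℕ) (ν : Fin r → ℕ) (a : Fin N → ℝ) (c : ℂ) (R : ℝ) (x y : ℝ) : ℂ :=
  ∫ u in Set.Ioi (0 : ℝ),
    (2 * Real.pi * Complex.I)⁻¹ *
      ∮ v in C(c, R),
        (u : ℂ) ^ ν0 * Complex.exp (-(u : ℂ) + v) * ((Psi r ν0 ν u x : ℝ) : ℂ) *
          Phi r ν0 ν v y * ((u : ℂ) - v)⁻¹ * ∏ l, ((u : ℂ) + (a l : ℂ)) / (v + (a l : ℂ))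

/-- An admissible contour for `K_N`: a counterclockwise circle contained in the left
half-plane which encloses all the points `-a l`. -/
def AdmCircle (N : ℕ) (a : Fin N → ℝ) (c : ℂ) (R : ℝ) : Prop :=
  0 < R ∧ c.re + R < 0 ∧ ∀ l, ‖-(a l : ℂ) - c‖ < R

/-- The Meijer G-function `G^{1,0}_{0,r+2}(—;0,-ν₀,…,-ν_r | z)`, complex argument. -/
def G1 (r ν0 : ℕ) (ν : Fin r → ℕ) (z : ℂ) : ℂ :=
  ∑' k : ℕ, (-z) ^ k /
    ((Nat.factorial k : ℂ) * (Real.Gamma ((ν0 : ℝ) + 1 + k) : ℂ) *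
      ∏ l, (Real.Gamma ((ν l : ℝ) + 1 + k) : ℂ))

/-- The Meijer G-function `G^{1,0}_{0,r+2}(—;0,-ν₀,…,-ν_r | z)`, real argument. -/
def G1R (r ν0 : ℕ) (ν : Fin r → ℕ) (z : ℝ) : ℝ :=
  ∑' k : ℕ, (-z) ^ k /
    (Nat.factorial k * Real.Gamma ((ν0 : ℝ) + 1 + k) *
      ∏ l, Real.Gamma ((ν l : ℝ) + 1 + k))

/-- `g₀(w) = ∑ (-1)^k w^{ν₀+k}/(k! Γ(ν₀+k+1))`, complex argument. -/
def g0C (ν0 : ℕ) (w : ℂ) : ℂ :=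
  ∑' k : ℕ, (-1 : ℂ) ^ k * w ^ (ν0 + k) /
    ((Nat.factorial k : ℂ) * (Real.Gamma ((ν0 : ℝ) + k + 1) : ℂ))

/-- `g₀(w)`, real argument. -/
def g0R (ν0 : ℕ) (w : ℝ) : ℝ :=
  ∑' k : ℕ, (-1 : ℝ) ^ k * w ^ (ν0 + k) /
    (Nat.factorial k * Real.Gamma ((ν0 : ℝ) + k + 1))

/-- The Meijer G-function `G^{r+1,0}_{0,r+2}(—;ν₀,…,ν_r,0 | z)` for `z > 0`, real form. -/
def G2R (r ν0 : ℕ) (ν : Fin r → ℕ) (z : ℝ) : ℝ :=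
  ∫ t in posOrth r,
    (∏ l, (t l) ^ ((ν l : ℝ) - 1) * Real.exp (-t l)) * g0R ν0 (z / ∏ l, t l)

/-- The critical hard-edge kernel `𝒦^{h,r}(ξ,η;τ)` of Theorem 1.2, the inner integral
running up the imaginary axis `v = i t`. -/
def Kcrit (r ν0 : ℕ) (ν : Fin r → ℕ) (G2 : ℂ → ℂ) (τ ξ η : ℝ) : ℂ :=
  (2 * Real.pi * Complex.I)⁻¹ *
    ∫ u in Set.Ioi (0 : ℝ), ∫ t : ℝ,
      ((u : ℂ) / (Complex.I * t)) ^ ν0 *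
        Complex.exp (-(τ : ℂ) * u - (u : ℂ) ^ 2 / 2 + (τ : ℂ) * (Complex.I * t) +
          (Complex.I * t) ^ 2 / 2) *
        ((u : ℂ) - Complex.I * t)⁻¹ * G1 r ν0 ν ((u * ξ : ℝ) : ℂ) *
        G2 (Complex.I * t * (η : ℂ)) * Complex.I

/-- The deformed critical kernel `𝒦^{h,r}_m(ξ,η;τ,σ)` of Theorem 1.3, the inner integral
running up the vertical line `Re v = -c`. -/
def KcritLine (r ν0 m : ℕ) (ν : Fin r → ℕ) (σ : ℕ → ℝ) (G2 : ℂ → ℂ) (c τ ξ η : ℝ) : ℂ :=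
  (2 * Real.pi * Complex.I)⁻¹ *
    ∫ u in Set.Ioi (0 : ℝ), ∫ t : ℝ,
      ((u : ℂ) / (-(c : ℂ) + Complex.I * t)) ^ ν0 *
        Complex.exp (-(τ : ℂ) * u - (u : ℂ) ^ 2 / 2 +
          (τ : ℂ) * (-(c : ℂ) + Complex.I * t) + (-(c : ℂ) + Complex.I * t) ^ 2 / 2) *
        ((u : ℂ) - (-(c : ℂ) + Complex.I * t))⁻¹ *
        (∏ j ∈ Finset.range m,
          ((u : ℂ) + (σ j : ℂ)) / ((-(c : ℂ) + Complex.I * t) + (σ j : ℂ))) *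
        G1 r ν0 ν ((u * ξ : ℝ) : ℂ) * G2 ((-(c : ℂ) + Complex.I * t) * (η : ℂ)) * Complex.I




/-- `Ψ(u;x)` in the case `r = 0`. -/
def Psi0 (ν0 : ℕ) (u x : ℝ) : ℝ :=
  Real.exp x * hyp0F1R ((ν0 : ℝ) + 1) (-(u * x)) / Real.Gamma ((ν0 : ℝ) + 1)

/-- `Φ(v;y)` in the case `r = 0`, complex `v`. -/
def Phi0 (ν0 : ℕ) (v : ℂ) (y : ℝ) : ℂ :=
  ((y ^ ν0 * Real.exp (-y) / Real.Gamma ((ν0 : ℝ) + 1) : ℝ) : ℂ) *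
    hyp0F1 ((ν0 : ℝ) + 1) (-(v * (y : ℂ)))

/-- The kernel `K_N` in the case `r = 0`. -/
def KN0 (ν0 N : ℕ) (a : Fin N → ℝ) (c : ℂ) (R : ℝ) (x y : ℝ) : ℂ :=
  ∫ u in Set.Ioi (0 : ℝ),
    (2 * Real.pi * Complex.I)⁻¹ *
      ∮ v in C(c, R),
        (u : ℂ) ^ ν0 * Complex.exp (-(u : ℂ) + v) * ((Psi0 ν0 u x : ℝ) : ℂ) *
          Phi0 ν0 v y * ((u : ℂ) - v)⁻¹ * ∏ l, ((u : ℂ) + (a l : ℂ)) / (v + (a l : ℂ))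

/-- Laguerre polynomial `L_n^{ν}(x)`. -/
def laguerreL (n νp : ℕ) (x : ℝ) : ℝ :=
  ∑ k ∈ Finset.range (n + 1),
    (-1 : ℝ) ^ k * (Nat.choose (n + νp) (n - k)) * x ^ k / Nat.factorial k

/-- The function `Ψ^{(μ)}(u;x)` of Section 4. -/
def PsiMu (r ν0 : ℕ) (μ ν : Fin r → ℕ) (u x : ℝ) : ℝ :=
  (1 / Real.Gamma ((ν0 : ℝ) + 1)) *
    ∑' k : ℕ, x ^ k / Nat.factorial k * hyp1F1T k ((ν0 : ℝ) + 1) u *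
      ∏ l, Real.Gamma ((μ l : ℝ) + 1 + k) / Real.Gamma ((ν l : ℝ) + 1 + k)

/-- The open unit cube in `ℝ^r`. -/
def unitCube (r : ℕ) : Set (Fin r → ℝ) := {t | ∀ i, 0 < t i ∧ t i < 1}

/-- The function `Φ^{(μ)}(v;y)` of Section 4, complex `v`. -/
def PhiMu (r ν0 : ℕ) (μ ν : Fin r → ℕ) (v : ℂ) (y : ℝ) : ℂ :=
  ((1 / (Real.Gamma ((ν0 : ℝ) + 1) * ∏ l, Real.Gamma ((μ l : ℝ) - (ν l : ℝ))) : ℝ) : ℂ) *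
    ∫ t in unitCube r,
      (((∏ l, (t l) ^ ((ν l : ℝ) - 1) * (1 - t l) ^ ((μ l : ℝ) - (ν l : ℝ) - 1)) *
          (y / ∏ l, t l) ^ ν0 * Real.exp (-(y / ∏ l, t l)) : ℝ) : ℂ) *
        hyp0F1 ((ν0 : ℝ) + 1) (-(v * ((y / ∏ l, t l : ℝ) : ℂ)))

/-- The function `Φ^{(μ)}(v;y)` of Section 4, real `v`. -/
def PhiMuR (r ν0 : ℕ) (μ ν : Fin r → ℕ) (v y : ℝ) : ℝ :=
  (1 / (Real.Gamma ((ν0 : ℝ) + 1) * ∏ l, Real.Gamma ((μ l : ℝ) - (ν l : ℝ)))) *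
    ∫ t in unitCube r,
      ((∏ l, (t l) ^ ((ν l : ℝ) - 1) * (1 - t l) ^ ((μ l : ℝ) - (ν l : ℝ) - 1)) *
          (y / ∏ l, t l) ^ ν0 * Real.exp (-(y / ∏ l, t l))) *
        hyp0F1R ((ν0 : ℝ) + 1) (-(v * (y / ∏ l, t l)))

/-- The kernel `K_N` for the truncated-unitary product of Section 4. -/
def KNmu (r ν0 N : ℕ) (μ ν : Fin r → ℕ) (a : Fin N → ℝ) (c : ℂ) (R : ℝ) (x y : ℝ) : ℂ :=
  ∫ u in Set.Ioi (0 : ℝ),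
    (2 * Real.pi * Complex.I)⁻¹ *
      ∮ v in C(c, R),
        (u : ℂ) ^ ν0 * Complex.exp (-(u : ℂ) + v) * ((PsiMu r ν0 μ ν u x : ℝ) : ℂ) *
          PhiMu r ν0 μ ν v y * ((u : ℂ) - v)⁻¹ * ∏ l, ((u : ℂ) + (a l : ℂ)) / (v + (a l : ℂ))

/-- Mixed domain `(0,1)^q × (0,∞)^{r-q}`. -/
def mixedSet (r q : ℕ) : Set (Fin r → ℝ) := {t | ∀ l, 0 < t l ∧ ((l : ℕ) < q → t l < 1)}

/-- The Meijer G-function `G^{1,q}_{q,r+2}(-μ₁,…,-μ_q; 0,-ν₀,…,-ν_r | z)`, real form. -/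
def G1qR (r ν0 q : ℕ) (μ ν : Fin r → ℕ) (z : ℝ) : ℝ :=
  ∑' k : ℕ, (-z) ^ k *
    (∏ l ∈ Finset.univ.filter fun l : Fin r => (l : ℕ) < q, Real.Gamma ((μ l : ℝ) + 1 + k)) /
    (Nat.factorial k * Real.Gamma ((ν0 : ℝ) + 1 + k) *
      ∏ l, Real.Gamma ((ν l : ℝ) + 1 + k))

/-- The Meijer G-function `G^{1,q}_{q,r+2}(-μ₁,…,-μ_q; 0,-ν₀,…,-ν_r | z)`, complex form. -/
def G1q (r ν0 q : ℕ) (μ ν : Fin r → ℕ) (z : ℂ) : ℂ :=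
  ∑' k : ℕ, (-z) ^ k *
    ((∏ l ∈ Finset.univ.filter fun l : Fin r => (l : ℕ) < q,
      Real.Gamma ((μ l : ℝ) + 1 + k) : ℝ) : ℂ) /
    ((Nat.factorial k : ℂ) * (Real.Gamma ((ν0 : ℝ) + 1 + k) : ℂ) *
      ∏ l, (Real.Gamma ((ν l : ℝ) + 1 + k) : ℂ))

/-- The Meijer G-function `G^{r+1,0}_{q,r+2}(μ₁,…,μ_q; ν₀,…,ν_r,0 | z)` for `z > 0`. -/
def G2qR (r ν0 q : ℕ) (μ ν : Fin r → ℕ) (z : ℝ) : ℝ :=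
  ∫ t in mixedSet r q,
    (∏ l : Fin r, if l.val < q then
        (t l) ^ ((ν l : ℝ) - 1) * (1 - t l) ^ ((μ l : ℝ) - (ν l : ℝ) - 1) /
          Real.Gamma ((μ l : ℝ) - (ν l : ℝ))
      else (t l) ^ ((ν l : ℝ) - 1) * Real.exp (-t l)) *
      g0R ν0 (z / ∏ l, t l)

/-!
The large parameters `bN` produce the factor `((1 + u / (bN)) / (1 + v / (bN))) ^ (N - m)`, whose
limit is `e ^ ((u - v) / b)`, and their only singularity in `v` is `-bN`. By partial fractions the
`v`-contour can be traded for a fixed circle around the sources and the circle around `-bN` of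
radius `2bN / (1 + b)`. On the latter the integrand is exponentially small in `N`; on the former it
converges, uniformly dominated by a multiple of `e ^ (-(1 - 1 / b) u / 2)`. The limit has the
exponential `e ^ (-(1 - 1 / b) (u - v))`, which the substitution `u, v ↦ b / (b - 1) · (u, v)` turns
into `e ^ (-u + v)`.
-/

section Homotopy

variable {E : Type*} [NormedAddCommGroup E] [NormedSpace ℂ E] {f : ℂ → E} {p q : ℝ → ℂ}

/-- The coefficient of `dt` in the pullback of the one-form `f dz` along the straight-line homotopy
`(t, θ) ↦ (1 - t) p(θ) + t q(θ)`. -/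
def pullbackFst (f : ℂ → E) (p q : ℝ → ℂ) (x : ℝ × ℝ) : E :=
  (q x.2 - p x.2) • f (AffineMap.lineMap (p x.2) (q x.2) x.1)

/-- The coefficient of `dθ` in the pullback of the one-form `f dz` along the straight-line homotopy
`(t, θ) ↦ (1 - t) p(θ) + t q(θ)`. -/
def pullbackSnd (f : ℂ → E) (p q : ℝ → ℂ) (x : ℝ × ℝ) : E :=
  AffineMap.lineMap (deriv p x.2) (deriv q x.2) x.1 •
    f (AffineMap.lineMap (p x.2) (q x.2) x.1)

theorem differentiableAt_comp_lineMap (hp : Differentiable ℝ p) (hq : Differentiable ℝ q)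
    {x : ℝ × ℝ} (hf : DifferentiableAt ℂ f (AffineMap.lineMap (p x.2) (q x.2) x.1)) :
    DifferentiableAt ℝ (fun x : ℝ × ℝ => f (AffineMap.lineMap (p x.2) (q x.2) x.1)) x := by
  have hγ : Differentiable ℝ fun x : ℝ × ℝ => AffineMap.lineMap (p x.2) (q x.2) x.1 := by
    simp only [AffineMap.lineMap_apply_module]
    fun_prop
  exact (hf.restrictScalars ℝ).comp x (hγ x)

theorem differentiableAt_pullbackFst (hp : Differentiable ℝ p) (hq : Differentiable ℝ q)
    {x : ℝ × ℝ} (hf : DifferentiableAt ℂ f (AffineMap.lineMap (p x.2) (q x.2) x.1)) :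
    DifferentiableAt ℝ (pullbackFst f p q) x :=
  DifferentiableAt.smul (by fun_prop) (differentiableAt_comp_lineMap hp hq hf)

theorem differentiableAt_pullbackSnd (hp : ContDiff ℝ 2 p) (hq : ContDiff ℝ 2 q)
    {x : ℝ × ℝ} (hf : DifferentiableAt ℂ f (AffineMap.lineMap (p x.2) (q x.2) x.1)) :
    DifferentiableAt ℝ (pullbackSnd f p q) x := by
  have : Differentiable ℝ (deriv p) := (hp.deriv' (n := 1)).differentiable one_ne_zero
  have : Differentiable ℝ (deriv q) := (hq.deriv' (n := 1)).differentiable one_ne_zero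
  refine DifferentiableAt.smul ?_ (differentiableAt_comp_lineMap
    (hp.differentiable two_ne_zero) (hq.differentiable two_ne_zero) hf)
  simp only [AffineMap.lineMap_apply_module]
  fun_prop

theorem fderiv_pullbackSnd_eq_fderiv_pullbackFst (hp : ContDiff ℝ 2 p) (hq : ContDiff ℝ 2 q)
    {t θ : ℝ} (hf : DifferentiableAt ℂ f (AffineMap.lineMap (p θ) (q θ) t)) :
    fderiv ℝ (pullbackSnd f p q) (t, θ) (1, 0) = fderiv ℝ (pullbackFst f p q) (t, θ) (0, 1) := by
  have hp' : Differentiable ℝ p := hp.differentiable two_ne_zero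
  have hq' : Differentiable ℝ q := hq.differentiable two_ne_zero
  have hγ_t : HasDerivAt (fun s => AffineMap.lineMap (p θ) (q θ) s) (q θ - p θ) t :=
    AffineMap.hasDerivAt_lineMap
  have hγθ_t : HasDerivAt (fun s => AffineMap.lineMap (deriv p θ) (deriv q θ) s)
      (deriv q θ - deriv p θ) t := AffineMap.hasDerivAt_lineMap
  have hγ_θ : HasDerivAt (fun s => AffineMap.lineMap (p s) (q s) t)
      (AffineMap.lineMap (deriv p θ) (deriv q θ) t) θ := by
    simp only [AffineMap.lineMap_apply_module]
    exact ((hp' θ).hasDerivAt.const_smul _).add ((hq' θ).hasDerivAt.const_smul _)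
  have hγt_θ : HasDerivAt (fun s => q s - p s) (deriv q θ - deriv p θ) θ :=
    (hq' θ).hasDerivAt.sub (hp' θ).hasDerivAt
  have h_t := (differentiableAt_pullbackSnd (x := (t, θ)) hp hq hf).hasFDerivAt.comp_hasDerivAt t
    ((hasDerivAt_id t).prodMk (hasDerivAt_const t θ))
  have h_θ := (differentiableAt_pullbackFst (x := (t, θ)) hp' hq' hf).hasFDerivAt.comp_hasDerivAt θ
    ((hasDerivAt_const θ t).prodMk (hasDerivAt_id θ))
  rw [h_t.unique (hγθ_t.smul (hf.hasDerivAt.scomp_of_eq t hγ_t rfl)),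
    h_θ.unique (hγt_θ.smul (hf.hasDerivAt.scomp_of_eq θ hγ_θ rfl)), smul_comm]
  rfl

theorem integral_deriv_smul_comp_eq_of_differentiableAt_lineMap {a b : ℝ} (hp : ContDiff ℝ 2 p)
    (hq : ContDiff ℝ 2 q) (hpab : p a = p b) (hqab : q a = q b)
    (hf : ∀ t ∈ Set.Icc (0 : ℝ) 1, ∀ θ, DifferentiableAt ℂ f (AffineMap.lineMap (p θ) (q θ) t)) :
    (∫ θ in a..b, deriv p θ • f (p θ)) = ∫ θ in a..b, deriv q θ • f (q θ) := by
  have hunit : Set.uIcc (0 : ℝ) 1 = Set.Icc 0 1 := Set.uIcc_of_le zero_le_one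
  have hFst : ∀ x : ℝ × ℝ, x.1 ∈ Set.Icc (0 : ℝ) 1 →
      DifferentiableAt ℝ (-pullbackFst f p q) x := fun x hx =>
    (differentiableAt_pullbackFst (hp.differentiable two_ne_zero)
      (hq.differentiable two_ne_zero) (hf x.1 hx x.2)).neg
  have hSnd : ∀ x : ℝ × ℝ, x.1 ∈ Set.Icc (0 : ℝ) 1 → DifferentiableAt ℝ (pullbackSnd f p q) x :=
    fun x hx => differentiableAt_pullbackSnd hp hq (hf x.1 hx x.2)
  have hclosed : ∀ t ∈ Set.Icc (0 : ℝ) 1, ∀ θ, fderiv ℝ (pullbackSnd f p q) (t, θ) (1, 0) +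
      fderiv ℝ (-pullbackFst f p q) (t, θ) (0, 1) = 0 := fun t ht θ => by
    rw [fderiv_neg, neg_apply,
      fderiv_pullbackSnd_eq_fderiv_pullbackFst hp hq (hf t ht θ), add_neg_cancel]
  have hstokes := integral2_divergence_prod_of_hasFDerivAt (pullbackSnd f p q) (-pullbackFst f p q)
    (fderiv ℝ (pullbackSnd f p q)) (fderiv ℝ (-pullbackFst f p q)) 0 a 1 b
    (fun x hx => (hSnd x (hunit ▸ hx.1)).continuousAt.continuousWithinAt)
    (fun x hx => (hFst x (hunit ▸ hx.1)).continuousAt.continuousWithinAt)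
    (fun x hx => (hSnd x (Set.Ioo_subset_Icc_self (by simpa using hx.1))).hasFDerivAt)
    (fun x hx => (hFst x (Set.Ioo_subset_Icc_self (by simpa using hx.1))).hasFDerivAt)
    ((integrableOn_congr_fun (fun x hx => hclosed x.1 (hunit ▸ hx.1) x.2)
      (measurableSet_uIcc.prod measurableSet_uIcc)).2 integrableOn_zero)
  have hvanish : (∫ t in (0 : ℝ)..1, ∫ θ in a..b, fderiv ℝ (pullbackSnd f p q) (t, θ) (1, 0) +
      fderiv ℝ (-pullbackFst f p q) (t, θ) (0, 1)) = 0 := by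
    rw [intervalIntegral.integral_congr (g := fun _ => 0) fun t ht => by
      simp only [hclosed t (hunit ▸ ht), intervalIntegral.integral_zero]]
    exact intervalIntegral.integral_zero
  simp only [hvanish, pullbackFst, pullbackSnd, Pi.neg_apply, AffineMap.lineMap_apply_zero,
    AffineMap.lineMap_apply_one, hpab, hqab, sub_self, zero_add] at hstokes
  exact (sub_eq_zero.1 hstokes.symm).symm

theorem circleIntegral_eq_of_differentiableAt_lineMap {c₀ c₁ : ℂ} {R₀ R₁ : ℝ}
    (hf : ∀ t ∈ Set.Icc (0 : ℝ) 1, ∀ θ,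
      DifferentiableAt ℂ f (AffineMap.lineMap (circleMap c₀ R₀ θ) (circleMap c₁ R₁ θ) t)) :
    (∮ z in C(c₀, R₀), f z) = ∮ z in C(c₁, R₁), f z :=
  have hloop (c : ℂ) (R : ℝ) : circleMap c R 0 = circleMap c R (2 * Real.pi) := by
    simpa using (periodic_circleMap c R 0).symm
  integral_deriv_smul_comp_eq_of_differentiableAt_lineMap (contDiff_circleMap c₀ R₀)
    (contDiff_circleMap c₁ R₁) (hloop c₀ R₀) (hloop c₁ R₁) hf

end Homotopy

section Splitting

variable {H S : Set ℂ} {f g : ℂ → ℂ} {P Q : Polynomial ℂ} {c c₁ c₂ : ℂ} {R R₁ R₂ : ℝ}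

theorem lineMap_circleMap_ne_of_mem_ball {z : ℂ} (h₁ : z ∈ Metric.ball c₁ R₁)
    (h₂ : z ∈ Metric.ball c₂ R₂) {t : ℝ} (ht : t ∈ Set.Icc (0 : ℝ) 1) (θ : ℝ) :
    AffineMap.lineMap (circleMap c₁ R₁ θ) (circleMap c₂ R₂ θ) t ≠ z := by
  rintro rfl
  set z : ℂ := AffineMap.lineMap (circleMap c₁ R₁ θ) (circleMap c₂ R₂ θ) t with hz
  rw [mem_ball_iff_norm] at h₁ h₂
  have hcenter : ((1 - t) * R₁ + t * R₂ : ℝ) * Complex.exp (θ * Complex.I) =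
      (1 - t : ℝ) * (z - c₁) + (t : ℝ) * (z - c₂) := by
    rw [hz, AffineMap.lineMap_apply_module]
    simp only [circleMap, Complex.real_smul]
    push_cast
    ring
  have hradius : |(1 - t) * R₁ + t * R₂| ≤ (1 - t) * ‖z - c₁‖ + t * ‖z - c₂‖ := by
    calc |(1 - t) * R₁ + t * R₂|
        = ‖((1 - t) * R₁ + t * R₂ : ℝ) * Complex.exp (θ * Complex.I)‖ := by
          rw [norm_mul, Complex.norm_exp_ofReal_mul_I, mul_one, Complex.norm_real,
            Real.norm_eq_abs]
      _ ≤ ‖(1 - t : ℝ) * (z - c₁)‖ + ‖(t : ℝ) * (z - c₂)‖ := hcenter ▸ norm_add_le _ _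
      _ = (1 - t) * ‖z - c₁‖ + t * ‖z - c₂‖ := by
          rw [norm_mul, norm_mul, Complex.norm_of_nonneg (sub_nonneg.2 ht.2),
            Complex.norm_of_nonneg ht.1]
  have hlt := (le_abs_self _).trans hradius
  rcases ht.1.eq_or_lt with rfl | ht0
  · linarith
  · nlinarith [mul_lt_mul_of_pos_left h₂ ht0,
      mul_le_mul_of_nonneg_left h₁.le (sub_nonneg.2 ht.2)]

theorem circleIntegral_eq_of_differentiableAt_sdiff (hH : Convex ℝ H)
    (hf : ∀ z ∈ H \ S, DifferentiableAt ℂ f z) (hR₁ : 0 ≤ R₁) (hR₂ : 0 ≤ R₂)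
    (h₁ : Metric.closedBall c₁ R₁ ⊆ H) (h₂ : Metric.closedBall c₂ R₂ ⊆ H)
    (hS₁ : S ⊆ Metric.ball c₁ R₁) (hS₂ : S ⊆ Metric.ball c₂ R₂) :
    (∮ z in C(c₁, R₁), f z) = ∮ z in C(c₂, R₂), f z :=
  circleIntegral_eq_of_differentiableAt_lineMap fun _ ht θ => hf _
    ⟨hH.lineMap_mem (h₁ (circleMap_mem_closedBall c₁ hR₁ θ))
      (h₂ (circleMap_mem_closedBall c₂ hR₂ θ)) ht,
    fun hz => lineMap_circleMap_ne_of_mem_ball (hS₁ hz) (hS₂ hz) ht θ rfl⟩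

theorem differentiableOn_mul_eval_div_eval (hg : DifferentiableOn ℂ g H) (A : Polynomial ℂ) :
    DifferentiableOn ℂ (fun z => g z * A.eval z / Q.eval z) (H \ {z | Q.IsRoot z}) :=
  ((hg.mono Set.sdiff_subset).mul A.differentiableOn).div Q.differentiableOn fun _ hz => hz.2

theorem isOpen_sdiff_isRoot (hH : IsOpen H) (hQ : Q ≠ 0) : IsOpen (H \ {z | Q.IsRoot z}) :=
  hH.sdiff (Polynomial.finite_setOfPred_isRoot hQ).isClosed

theorem circleIntegral_mul_eval_div_eval_eq_zero
    (hg : DifferentiableOn ℂ g H) (A : Polynomial ℂ) (hR : 0 ≤ R) (h : Metric.closedBall c R ⊆ H)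
    (hQ : ∀ z, Q.IsRoot z → z ∉ Metric.closedBall c R) :
    (∮ z in C(c, R), g z * A.eval z / Q.eval z) = 0 :=
  ((differentiableOn_mul_eval_div_eval hg A).diffContOnCl_ball
    fun z hz => ⟨h hz, fun hz0 => hQ z hz0 hz⟩).circleIntegral_eq_zero hR

theorem circleIntegral_mul_eval_div_eval_eq (hHo : IsOpen H) (hHc : Convex ℝ H)
    (hg : DifferentiableOn ℂ g H) (A : Polynomial ℂ) (hQ : Q ≠ 0) (hR₁ : 0 ≤ R₁) (hR₂ : 0 ≤ R₂)
    (h₁ : Metric.closedBall c₁ R₁ ⊆ H) (h₂ : Metric.closedBall c₂ R₂ ⊆ H)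
    (hQ₁ : ∀ z, Q.IsRoot z → z ∈ Metric.ball c₁ R₁)
    (hQ₂ : ∀ z, Q.IsRoot z → z ∈ Metric.ball c₂ R₂) :
    (∮ z in C(c₁, R₁), g z * A.eval z / Q.eval z) = ∮ z in C(c₂, R₂), g z * A.eval z / Q.eval z :=
  circleIntegral_eq_of_differentiableAt_sdiff hHc
    (fun _ hz => (differentiableOn_mul_eval_div_eval hg A).differentiableAt
      ((isOpen_sdiff_isRoot hHo hQ).mem_nhds hz)) hR₁ hR₂ h₁ h₂ hQ₁ hQ₂

theorem circleIntegral_div_mul_eq_add_of_isCoprime (hg : ContinuousOn g (Metric.sphere c R))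
    {A B : Polynomial ℂ} (hAB : A * P + B * Q = 1) (hR : 0 ≤ R)
    (hP : ∀ z, P.IsRoot z → z ∉ Metric.sphere c R)
    (hQ : ∀ z, Q.IsRoot z → z ∉ Metric.sphere c R) :
    (∮ z in C(c, R), g z / (P.eval z * Q.eval z)) =
      (∮ z in C(c, R), g z * B.eval z / P.eval z) + ∮ z in C(c, R), g z * A.eval z / Q.eval z := by
  rw [← circleIntegral.integral_add]
  · refine circleIntegral.integral_congr hR fun z hz => ?_
    have hPz : P.eval z ≠ 0 := fun h0 => hP z h0 hz
    have hQz : Q.eval z ≠ 0 := fun h0 => hQ z h0 hz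
    have hbezout : A.eval z * P.eval z + B.eval z * Q.eval z = 1 := by
      simpa using congrArg (Polynomial.eval z) hAB
    field_simp
    linear_combination (-g z) * hbezout
  · exact ((hg.mul B.continuousOn).div P.continuousOn fun z hz h0 =>
      hP z h0 hz).circleIntegrable hR
  · exact ((hg.mul A.continuousOn).div Q.continuousOn fun z hz h0 =>
      hQ z h0 hz).circleIntegrable hR

-- Bézout turns `g / (PQ)` into `gB / P + gA / Q`, and each summand has poles in one circle only.
theorem circleIntegral_div_mul_eq_add (hHo : IsOpen H) (hHc : Convex ℝ H)
    (hg : DifferentiableOn ℂ g H) (hR : 0 ≤ R) (hR₁ : 0 ≤ R₁) (hR₂ : 0 ≤ R₂)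
    (h : Metric.closedBall c R ⊆ H) (h₁ : Metric.closedBall c₁ R₁ ⊆ H)
    (h₂ : Metric.closedBall c₂ R₂ ⊆ H)
    (hP : ∀ z, P.IsRoot z → z ∈ (Metric.ball c R ∩ Metric.ball c₁ R₁) \ Metric.closedBall c₂ R₂)
    (hQ : ∀ z, Q.IsRoot z → z ∈ (Metric.ball c R ∩ Metric.ball c₂ R₂) \ Metric.closedBall c₁ R₁) :
    (∮ z in C(c, R), g z / (P.eval z * Q.eval z)) =
      (∮ z in C(c₁, R₁), g z / (P.eval z * Q.eval z)) +
        ∮ z in C(c₂, R₂), g z / (P.eval z * Q.eval z) := by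
  have hP0 : P ≠ 0 := by rintro rfl; exact (hP c₂ (by simp)).2 (Metric.mem_closedBall_self hR₂)
  have hQ0 : Q ≠ 0 := by rintro rfl; exact (hQ c₁ (by simp)).2 (Metric.mem_closedBall_self hR₁)
  obtain ⟨A, B, hAB⟩ : IsCoprime P Q := by
    refine (Polynomial.isCoprime_iff_aeval_ne_zero_of_isAlgClosed ℂ ℂ P Q).2 fun z => ?_
    simp only [Polynomial.coe_aeval_eq_eval]
    by_contra! hz
    exact (hP z hz.1).2 (Metric.ball_subset_closedBall (hQ z hz.2).1.2)
  have hin {z c' : ℂ} {R' : ℝ} (hz : z ∈ Metric.ball c' R') : z ∉ Metric.sphere c' R' :=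
    fun h' => (Metric.mem_ball.1 hz).ne h'
  have hout {z c' : ℂ} {R' : ℝ} (hz : z ∉ Metric.closedBall c' R') : z ∉ Metric.sphere c' R' :=
    fun h' => hz (Metric.sphere_subset_closedBall h')
  have hcont {c' : ℂ} {R' : ℝ} (h' : Metric.closedBall c' R' ⊆ H) :
      ContinuousOn g (Metric.sphere c' R') :=
    hg.continuousOn.mono (Metric.sphere_subset_closedBall.trans h')
  rw [circleIntegral_div_mul_eq_add_of_isCoprime (hcont h) hAB hR
      (fun z hz => hin (hP z hz).1.1) fun z hz => hin (hQ z hz).1.1,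
    circleIntegral_div_mul_eq_add_of_isCoprime (hcont h₁) hAB hR₁
      (fun z hz => hin (hP z hz).1.2) fun z hz => hout (hQ z hz).2,
    circleIntegral_div_mul_eq_add_of_isCoprime (hcont h₂) hAB hR₂
      (fun z hz => hout (hP z hz).2) fun z hz => hin (hQ z hz).1.2,
    circleIntegral_mul_eval_div_eval_eq_zero hg A hR₁ h₁ fun z hz => (hQ z hz).2,
    circleIntegral_mul_eval_div_eval_eq_zero hg B hR₂ h₂ fun z hz => (hP z hz).2,
    circleIntegral_mul_eval_div_eval_eq hHo hHc hg B hP0 hR hR₁ h h₁ (fun z hz => (hP z hz).1.1)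
      fun z hz => (hP z hz).1.2,
    circleIntegral_mul_eval_div_eval_eq hHo hHc hg A hQ0 hR hR₂ h h₂ (fun z hz => (hQ z hz).1.1)
      fun z hz => (hQ z hz).1.2, add_zero, zero_add]

end Splitting

section CauchyTransform

/-- The Cauchy transform `∮ G(v) / (u - v) dv` along the circle of centre `c` and radius `R`. It is
only used for `u` to the right of a circle contained in the left half-plane. -/
def cauchyTransform (G : ℂ → ℂ) (c : ℂ) (R : ℝ) (u : ℂ) : ℂ :=
  ∮ v in C(c, R), G v * (u - v)⁻¹

variable {G : ℂ → ℂ} {c c₁ c₂ : ℂ} {R R₁ R₂ : ℝ}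

theorem re_le_of_mem_closedBall {v : ℂ} (hv : v ∈ Metric.closedBall c R) : v.re ≤ c.re + R := by
  have h := (Complex.re_le_norm (v - c)).trans (mem_closedBall_iff_norm.1 hv)
  rw [Complex.sub_re] at h
  linarith

theorem norm_ofReal_sub_inv_le {d u : ℝ} (hd : 0 < d) (hu : 0 ≤ u) {v : ℂ} (hv : v.re ≤ -d) :
    ‖((u : ℂ) - v)⁻¹‖ ≤ d⁻¹ := by
  have hre := Complex.re_le_norm ((u : ℂ) - v)
  rw [Complex.sub_re, Complex.ofReal_re] at hre
  rw [norm_inv]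
  gcongr
  linarith

theorem norm_mul_ofReal_sub_inv_le (hleft : c.re + R < 0) {u : ℝ} (hu : 0 ≤ u) {v : ℂ}
    (hv : v ∈ Metric.closedBall c R) {B : ℝ} (hG : ‖G v‖ ≤ B) :
    ‖G v * ((u : ℂ) - v)⁻¹‖ ≤ B * (-(c.re + R))⁻¹ := by
  rw [norm_mul]
  exact mul_le_mul hG (norm_ofReal_sub_inv_le (neg_pos.2 hleft) hu
    (by rw [neg_neg]; exact re_le_of_mem_closedBall hv)) (norm_nonneg _)
    ((norm_nonneg _).trans hG)

theorem norm_cauchyTransform_le (hR : 0 ≤ R) (hleft : c.re + R < 0) {u : ℝ} (hu : 0 ≤ u) {B : ℝ}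
    (hG : ∀ v ∈ Metric.sphere c R, ‖G v‖ ≤ B) :
    ‖cauchyTransform G c R u‖ ≤ 2 * Real.pi * R * (B * (-(c.re + R))⁻¹) :=
  circleIntegral.norm_integral_le_of_norm_le_const hR fun v hv =>
    norm_mul_ofReal_sub_inv_le hleft hu (Metric.sphere_subset_closedBall hv) (hG v hv)

theorem stronglyMeasurable_cauchyTransform (hG : Measurable G) (c : ℂ) (R : ℝ) :
    StronglyMeasurable fun u : ℝ => cauchyTransform G c R u := by
  simp only [cauchyTransform, circleIntegral, intervalIntegral.integral_of_le Real.two_pi_pos.le]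
  refine StronglyMeasurable.integral_prod_right (Measurable.stronglyMeasurable ?_)
  have : Measurable (circleMap c R) := (continuous_circleMap c R).measurable
  have : Measurable (deriv (circleMap c R)) := measurable_deriv _
  simp only [smul_eq_mul, Function.uncurry_def]
  fun_prop

theorem tendsto_circleIntegral {ι : Type*} {l : Filter ι} [l.IsCountablyGenerated]
    {f : ι → ℂ → ℂ} {f₀ : ℂ → ℂ} {B : ℝ} (hR : 0 ≤ R) (hf : ∀ n, Measurable (f n))
    (hbound : ∀ᶠ n in l, ∀ v ∈ Metric.sphere c R, ‖f n v‖ ≤ B)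
    (hlim : ∀ v ∈ Metric.sphere c R, Tendsto (fun n => f n v) l (𝓝 (f₀ v))) :
    Tendsto (fun n => ∮ v in C(c, R), f n v) l (𝓝 (∮ v in C(c, R), f₀ v)) := by
  refine intervalIntegral.tendsto_integral_filter_of_dominated_convergence
    (fun _ => R * B) ?_ ?_ intervalIntegrable_const ?_
  · exact Eventually.of_forall fun n => ((measurable_deriv (circleMap c R)).smul
      ((hf n).comp (continuous_circleMap c R).measurable)).aestronglyMeasurable
  · filter_upwards [hbound] with n hn
    refine Eventually.of_forall fun θ _ => ?_
    rw [norm_smul, deriv_circleMap, norm_mul, norm_circleMap_zero, Complex.norm_I, mul_one,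
      abs_of_nonneg hR]
    exact mul_le_mul_of_nonneg_left (hn _ (circleMap_mem_sphere c hR θ)) hR
  · exact Eventually.of_forall fun θ _ => (hlim _ (circleMap_mem_sphere c hR θ)).const_smul _

theorem tendsto_cauchyTransform {ι : Type*} {l : Filter ι} [l.IsCountablyGenerated]
    {G : ι → ℂ → ℂ} {G₀ : ℂ → ℂ} {B : ℝ} (hR : 0 ≤ R) (hleft : c.re + R < 0)
    (hG : ∀ n, Measurable (G n)) (hbound : ∀ᶠ n in l, ∀ v ∈ Metric.sphere c R, ‖G n v‖ ≤ B)
    (hlim : ∀ v ∈ Metric.sphere c R, Tendsto (fun n => G n v) l (𝓝 (G₀ v)))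
    {u : ℝ} (hu : 0 ≤ u) :
    Tendsto (fun n => cauchyTransform (G n) c R u) l (𝓝 (cauchyTransform G₀ c R u)) := by
  refine tendsto_circleIntegral (B := B * (-(c.re + R))⁻¹) hR
    (fun n => (hG n).mul (by fun_prop)) ?_ fun v hv => (hlim v hv).mul_const _
  filter_upwards [hbound] with n hn v hv
  exact norm_mul_ofReal_sub_inv_le hleft hu (Metric.sphere_subset_closedBall hv) (hn v hv)

/-- The circle of centre `c` and radius `R` lies in the open left half-plane and encloses the roots
of `P`; it is then an admissible contour for weights with denominator `P`. -/
structure EnclosesRoots (P : Polynomial ℂ) (c : ℂ) (R : ℝ) : Prop where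
  radius_nonneg : 0 ≤ R
  re_add_radius_neg : c.re + R < 0
  mem_ball : ∀ z, P.IsRoot z → z ∈ Metric.ball c R

theorem EnclosesRoots.closedBall_subset {P : Polynomial ℂ} (h : EnclosesRoots P c R) :
    Metric.closedBall c R ⊆ {z : ℂ | z.re < 0} := fun _ hv =>
  (re_le_of_mem_closedBall hv).trans_lt h.re_add_radius_neg

theorem EnclosesRoots.eval_ne_zero {P : Polynomial ℂ} (h : EnclosesRoots P c R) {z : ℂ}
    (hz : z ∉ Metric.ball c R) : P.eval z ≠ 0 := fun h0 => hz (h.mem_ball z h0)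

theorem cauchyTransform_div_mul_eq_add {g : ℂ → ℂ} {P Q : Polynomial ℂ} (hg : Differentiable ℂ g)
    (hPQ : EnclosesRoots (P * Q) c R) (hP : EnclosesRoots P c₁ R₁) (hQ : EnclosesRoots Q c₂ R₂)
    (hP₂ : ∀ z, P.IsRoot z → z ∉ Metric.closedBall c₂ R₂)
    (hQ₁ : ∀ z, Q.IsRoot z → z ∉ Metric.closedBall c₁ R₁) {u : ℝ} (hu : 0 ≤ u) :
    cauchyTransform (fun v => g v / (P.eval v * Q.eval v)) c R u =
      cauchyTransform (fun v => g v / (P.eval v * Q.eval v)) c₁ R₁ u +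
        cauchyTransform (fun v => g v / (P.eval v * Q.eval v)) c₂ R₂ u := by
  have hdiff : DifferentiableOn ℂ (fun v => g v * ((u : ℂ) - v)⁻¹) {z : ℂ | z.re < 0} := by
    refine hg.differentiableOn.mul (DifferentiableOn.inv (by fun_prop) fun v hv h0 => ?_)
    rw [Set.mem_ofPred_eq, ← sub_eq_zero.1 h0, Complex.ofReal_re] at hv
    linarith
  simp only [cauchyTransform, div_mul_eq_mul_div]
  exact circleIntegral_div_mul_eq_add (isOpen_lt Complex.continuous_re continuous_const)
    (convex_halfSpace_re_lt 0) hdiff hPQ.radius_nonneg hP.radius_nonneg hQ.radius_nonneg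
    hPQ.closedBall_subset hP.closedBall_subset hQ.closedBall_subset
    (fun z hz => ⟨⟨hPQ.mem_ball z (Polynomial.root_mul_right_of_isRoot Q hz), hP.mem_ball z hz⟩,
      hP₂ z hz⟩)
    (fun z hz => ⟨⟨hPQ.mem_ball z (Polynomial.root_mul_left_of_isRoot P hz), hQ.mem_ball z hz⟩,
      hQ₁ z hz⟩)

theorem circleIntegral_ofReal_mul (f : ℂ → ℂ) (c : ℂ) (R κ : ℝ) :
    (∮ v in C((κ : ℂ) * c, κ * R), f v) = (κ : ℂ) * ∮ v in C(c, R), f ((κ : ℂ) * v) := by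
  have hmap (a : ℂ) (θ : ℝ) : circleMap ((κ : ℂ) * a) (κ * R) θ = (κ : ℂ) * circleMap a R θ := by
    simp only [circleMap]
    push_cast
    ring
  have hmap₀ (θ : ℝ) : circleMap 0 (κ * R) θ = (κ : ℂ) * circleMap 0 R θ := by
    simpa only [mul_zero] using hmap 0 θ
  rw [← circleIntegral.integral_const_mul]
  simp only [circleIntegral, deriv_circleMap, hmap, hmap₀, smul_eq_mul]
  congr 1 with θ
  ring

theorem cauchyTransform_ofReal_mul (G : ℂ → ℂ) (c : ℂ) (R : ℝ) {κ : ℝ} (hκ : κ ≠ 0) (u : ℂ) :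
    cauchyTransform G (κ * c) (κ * R) (κ * u) = cauchyTransform (fun v => G (κ * v)) c R u := by
  have hκ' : (κ : ℂ) ≠ 0 := Complex.ofReal_ne_zero.2 hκ
  rw [cauchyTransform, circleIntegral_ofReal_mul, ← circleIntegral.integral_const_mul,
    cauchyTransform]
  congr 1 with v
  rw [← mul_sub, mul_inv]
  field_simp

/-- The double integral `∫₀^∞ ∮ F(u) G(v) / (u - v) dv du` of a product weight against the Cauchy
kernel, the `v`-contour being the circle of centre `c` and radius `R`. -/
def doubleContour (F G : ℂ → ℂ) (c : ℂ) (R : ℝ) : ℂ :=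
  ∫ u in Set.Ioi (0 : ℝ), F u * cauchyTransform G c R u

theorem doubleContour_const_mul_const_mul (A B : ℂ) (F G : ℂ → ℂ) (c : ℂ) (R : ℝ) :
    doubleContour (fun u => A * F u) (fun v => B * G v) c R = A * B * doubleContour F G c R := by
  simp only [doubleContour, cauchyTransform, mul_assoc B, circleIntegral.integral_const_mul,
    mul_mul_mul_comm A, integral_const_mul]

theorem doubleContour_ofReal_mul (F G : ℂ → ℂ) (c : ℂ) (R : ℝ) {κ : ℝ} (hκ : 0 < κ) :
    doubleContour F G (κ * c) (κ * R) =
      κ * doubleContour (fun u => F (κ * u)) (fun v => G (κ * v)) c R := by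
  have h := integral_comp_mul_left_Ioi
    (fun u : ℝ => F u * cauchyTransform G (κ * c) (κ * R) u) 0 hκ
  simp only [mul_zero, Complex.ofReal_mul, cauchyTransform_ofReal_mul G c R hκ.ne'] at h
  rw [doubleContour, doubleContour, h, Complex.real_smul, Complex.ofReal_inv,
    mul_inv_cancel_left₀ (Complex.ofReal_ne_zero.2 hκ.ne')]

end CauchyTransform

/-- A function of exponential type zero: its growth is at most `exp (ε ‖z‖)` for every `ε > 0`. -/
def IsSubexponential (f : ℂ → ℂ) : Prop :=
  ∀ ε : ℝ, 0 < ε → ∃ C, ∀ z, ‖f z‖ ≤ C * Real.exp (ε * ‖z‖)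

namespace IsSubexponential

variable {f g : ℂ → ℂ}

theorem const (a : ℂ) : IsSubexponential fun _ => a := fun ε hε =>
  ⟨‖a‖, fun z => le_mul_of_one_le_right (norm_nonneg a) (Real.one_le_exp (by positivity))⟩

theorem id : IsSubexponential fun z => z := fun ε hε => ⟨ε⁻¹, fun z => by
  rw [inv_mul_eq_div, le_div_iff₀' hε]
  linarith [Real.add_one_le_exp (ε * ‖z‖)]⟩

theorem add (hf : IsSubexponential f) (hg : IsSubexponential g) :
    IsSubexponential fun z => f z + g z := fun ε hε => by
  obtain ⟨C, hC⟩ := hf ε hε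
  obtain ⟨D, hD⟩ := hg ε hε
  refine ⟨C + D, fun z => (norm_add_le _ _).trans ?_⟩
  rw [add_mul]
  exact add_le_add (hC z) (hD z)

theorem mul (hf : IsSubexponential f) (hg : IsSubexponential g) :
    IsSubexponential fun z => f z * g z := fun ε hε => by
  obtain ⟨C, hC⟩ := hf (ε / 2) (half_pos hε)
  obtain ⟨D, hD⟩ := hg (ε / 2) (half_pos hε)
  refine ⟨C * D, fun z => ?_⟩
  calc ‖f z * g z‖
      ≤ (C * Real.exp (ε / 2 * ‖z‖)) * (D * Real.exp (ε / 2 * ‖z‖)) := by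
        rw [norm_mul]
        exact mul_le_mul (hC z) (hD z) (norm_nonneg _) ((norm_nonneg _).trans (hC z))
    _ = C * D * Real.exp (ε * ‖z‖) := by
        rw [mul_mul_mul_comm, ← Real.exp_add]
        ring_nf

theorem polynomial (P : Polynomial ℂ) : IsSubexponential fun z => P.eval z := by
  induction P using Polynomial.induction_on with
  | C a => simpa only [Polynomial.eval_C] using const a
  | add P Q hP hQ => simpa only [Polynomial.eval_add] using hP.add hQ
  | monomial n a h => simpa only [pow_succ, ← mul_assoc, Polynomial.eval_mul_X] using h.mul id

theorem comp_mul_right (hf : IsSubexponential f) (w : ℂ) :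
    IsSubexponential fun z => f (z * w) := fun ε hε => by
  obtain ⟨C, hC⟩ := hf (ε / (‖w‖ + 1)) (by positivity)
  have hC0 : 0 ≤ C := by simpa using (norm_nonneg _).trans (hC 0)
  refine ⟨C, fun z => (hC _).trans
    (mul_le_mul_of_nonneg_left (Real.exp_le_exp.2 ?_) hC0)⟩
  rw [norm_mul, div_mul_eq_mul_div, div_le_iff₀ (by positivity)]
  nlinarith [mul_nonneg hε.le (norm_nonneg z)]

end IsSubexponential

section Hypergeometric

variable {b : ℝ}

theorem Gamma_mul_factorial_le_Gamma_add (hb : 1 ≤ b) (k : ℕ) :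
    Real.Gamma b * k.factorial ≤ Real.Gamma (b + k) := by
  induction k with
  | zero => simp
  | succ k ih =>
    have hbk : 0 < b + k := by positivity
    calc Real.Gamma b * (k + 1).factorial = (1 + k) * (Real.Gamma b * k.factorial) := by
          rw [Nat.factorial_succ]; push_cast; ring
      _ ≤ (b + k) * Real.Gamma (b + k) := by gcongr
      _ = Real.Gamma (b + (k + 1 : ℕ)) := by
          rw [← Real.Gamma_add_one hbk.ne', Nat.cast_succ, add_assoc]

theorem norm_hyp0F1_term_le (hb : 1 ≤ b) (k : ℕ) (z : ℂ) :
    ‖(Real.Gamma b : ℂ) * z ^ k / ((k.factorial : ℂ) * (Real.Gamma (b + k) : ℂ))‖ ≤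
      ‖z‖ ^ k / k.factorial / k.factorial := by
  have hΓ : 0 < Real.Gamma b := Real.Gamma_pos_of_pos (by linarith)
  have hΓk : 0 < Real.Gamma (b + k) := Real.Gamma_pos_of_pos (by positivity)
  rw [norm_div, norm_mul, norm_mul, norm_pow, Complex.norm_natCast, Complex.norm_of_nonneg hΓ.le,
    Complex.norm_of_nonneg hΓk.le, div_div, div_le_div_iff₀ (by positivity) (by positivity)]
  calc Real.Gamma b * ‖z‖ ^ k * (k.factorial * k.factorial)
      = ‖z‖ ^ k * (k.factorial * (Real.Gamma b * k.factorial)) := by ring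
    _ ≤ ‖z‖ ^ k * (k.factorial * Real.Gamma (b + k)) := by
        gcongr
        exact Gamma_mul_factorial_le_Gamma_add hb k

-- One factorial absorbs `ε⁻ᵏ`, the other sums to an exponential.
theorem isSubexponential_hyp0F1 (hb : 1 ≤ b) : IsSubexponential (hyp0F1 b) := fun ε hε => by
  refine ⟨Real.exp ε⁻¹, fun z => ?_⟩
  have hexp := (NormedSpace.expSeries_div_hasSum_exp (𝔸 := ℝ) (ε * ‖z‖)).mul_left (Real.exp ε⁻¹)
  rw [← Real.exp_eq_exp_ℝ] at hexp
  refine tsum_of_norm_bounded hexp fun k => (norm_hyp0F1_term_le hb k z).trans ?_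
  calc ‖z‖ ^ k / k.factorial / k.factorial
      = (ε⁻¹ ^ k / k.factorial) * ((ε * ‖z‖) ^ k / k.factorial) := by
        rw [div_mul_div_comm, ← mul_pow, inv_mul_cancel_left₀ hε.ne', div_div]
    _ ≤ Real.exp ε⁻¹ * ((ε * ‖z‖) ^ k / k.factorial) := by
        gcongr
        exact Real.pow_div_factorial_le_exp _ (by positivity) k

theorem differentiable_hyp0F1 (hb : 1 ≤ b) : Differentiable ℂ (hyp0F1 b) := fun z => by
  have hz : z ∈ Metric.ball (0 : ℂ) (‖z‖ + 1) := by simp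
  refine DifferentiableOn.differentiableAt ?_ (Metric.isOpen_ball.mem_nhds hz)
  refine Complex.differentiableOn_tsum_of_summable_norm
    (Real.summable_pow_div_factorial (‖z‖ + 1)) (fun k => by fun_prop) Metric.isOpen_ball
    fun k w hw => (norm_hyp0F1_term_le hb k w).trans ?_
  calc ‖w‖ ^ k / k.factorial / k.factorial ≤ ‖w‖ ^ k / k.factorial :=
        div_le_self (by positivity) (mod_cast Nat.one_le_iff_ne_zero.2 k.factorial_ne_zero)
    _ ≤ (‖z‖ + 1) ^ k / k.factorial := by
        gcongr
        exact (mem_ball_zero_iff.1 hw).le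

theorem ofReal_hyp0F1R (b z : ℝ) : ((hyp0F1R b z : ℝ) : ℂ) = hyp0F1 b (z : ℂ) := by
  simp only [hyp0F1R, hyp0F1, Complex.ofReal_tsum]
  push_cast
  rfl

end Hypergeometric

section ExpApprox

variable {b : ℝ} {m N : ℕ} {z : ℂ}

/-- The polynomial `(1 + z / (bN)) ^ (N - m)`, an approximation of `exp (z / b)`: up to a constant
factor it is the contribution of the `N - m` parameters equal to `bN`. -/
def expApprox (b : ℝ) (m N : ℕ) : Polynomial ℂ :=
  (1 + Polynomial.C (((b * N : ℝ)⁻¹ : ℝ) : ℂ) * Polynomial.X) ^ (N - m)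

theorem eval_expApprox (b : ℝ) (m N : ℕ) (z : ℂ) :
    (expApprox b m N).eval z = (1 + z / (b * N : ℝ)) ^ (N - m) := by
  simp only [expApprox, Polynomial.eval_pow, Polynomial.eval_add, Polynomial.eval_one,
    Polynomial.eval_mul, Polynomial.eval_C, Polynomial.eval_X, Complex.ofReal_inv, inv_mul_eq_div]

theorem eq_neg_of_isRoot_expApprox (hz : (expApprox b m N).IsRoot z) : z = -(b * N : ℝ) := by
  rw [Polynomial.IsRoot, eval_expApprox] at hz
  have hlin := eq_zero_of_pow_eq_zero hz
  have hbN : ((b * N : ℝ) : ℂ) ≠ 0 := fun h0 => by simp [h0] at hlin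
  field_simp at hlin
  linear_combination hlin

theorem tendsto_eval_expApprox (b : ℝ) (m : ℕ) (z : ℂ) :
    Tendsto (fun N => (expApprox b m N).eval z) atTop (𝓝 (Complex.exp (z / b))) := by
  have hbase : Tendsto (fun N : ℕ => 1 + z / b / (N : ℂ)) atTop (𝓝 1) := by
    simpa using (tendsto_const_div_atTop_nhds_zero_nat (z / b)).const_add 1
  have hquot := (Complex.tendsto_one_add_div_pow_exp (z / b)).div
    (by simpa only [one_pow] using hbase.pow m) one_ne_zero
  rw [div_one] at hquot
  refine hquot.congr' ?_
  filter_upwards [eventually_ge_atTop m, hbase.eventually_ne one_ne_zero] with N hN hne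
  rw [eval_expApprox, Complex.ofReal_mul, Complex.ofReal_natCast, ← div_div, pow_sub₀ _ hne hN]
  rfl

theorem exp_mul_norm_div_pow_le (hb : 0 < b) {t : ℝ} (ht : 0 ≤ t) (m N : ℕ) (z : ℂ) :
    Real.exp (t * ‖z / (b * N : ℝ)‖) ^ (N - m) ≤ Real.exp (t * ‖z‖ / b) := by
  rcases N.eq_zero_or_pos with rfl | hN
  · simpa using Real.one_le_exp (by positivity : 0 ≤ t * ‖z‖ / b)
  · calc Real.exp (t * ‖z / (b * N : ℝ)‖) ^ (N - m)
        ≤ Real.exp (t * ‖z / (b * N : ℝ)‖) ^ N :=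
          pow_le_pow_right₀ (Real.one_le_exp (by positivity)) (Nat.sub_le N m)
      _ = Real.exp (t * ‖z‖ / b) := by
          rw [← Real.exp_nat_mul, norm_div, Complex.norm_of_nonneg (by positivity)]
          congr 1
          field_simp

theorem norm_eval_expApprox_le (hb : 0 < b) (m N : ℕ) (z : ℂ) :
    ‖(expApprox b m N).eval z‖ ≤ Real.exp (‖z‖ / b) := by
  rw [eval_expApprox, norm_pow]
  calc ‖1 + z / (b * N : ℝ)‖ ^ (N - m)
      ≤ Real.exp (1 * ‖z / (b * N : ℝ)‖) ^ (N - m) := by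
        gcongr
        rw [one_mul]
        refine (norm_add_le _ _).trans ?_
        rw [norm_one, add_comm]
        exact Real.add_one_le_exp _
    _ ≤ Real.exp (‖z‖ / b) := by
        simpa only [one_mul] using exp_mul_norm_div_pow_le hb zero_le_one m N z

theorem norm_inv_one_add_le {w : ℂ} (hw : ‖w‖ ≤ 1 / 2) : ‖(1 + w)⁻¹‖ ≤ Real.exp (2 * ‖w‖) := by
  have hlow : 1 - ‖w‖ ≤ ‖1 + w‖ := by
    simpa using norm_sub_norm_le 1 (-w)
  rw [norm_inv]
  calc ‖1 + w‖⁻¹ ≤ (1 - ‖w‖)⁻¹ := inv_anti₀ (by linarith) hlow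
    _ ≤ 2 * ‖w‖ + 1 := by
        rw [inv_le_iff_one_le_mul₀ (by linarith)]
        nlinarith [norm_nonneg w]
    _ ≤ Real.exp (2 * ‖w‖) := Real.add_one_le_exp _

theorem norm_inv_eval_expApprox_le (hb : 0 < b) (m : ℕ) (hz : 2 * ‖z‖ ≤ b * N) :
    ‖((expApprox b m N).eval z)⁻¹‖ ≤ Real.exp (2 * ‖z‖ / b) := by
  have hw : ‖z / (b * N : ℝ)‖ ≤ 1 / 2 := by
    rw [norm_div, Complex.norm_of_nonneg (by positivity)]
    exact div_le_of_le_mul₀ (by positivity) (by norm_num) (by linarith)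
  rw [eval_expApprox, ← inv_pow, norm_pow]
  exact (pow_le_pow_left₀ (norm_nonneg _) (norm_inv_one_add_le hw) _).trans
    (exp_mul_norm_div_pow_le hb zero_le_two m N z)

theorem norm_eval_expApprox_of_mem_sphere (hbN : 0 < b * N) {ρ : ℝ}
    (hz : z ∈ Metric.sphere (-((b * N : ℝ) : ℂ)) (ρ * (b * N))) (m : ℕ) :
    ‖(expApprox b m N).eval z‖ = ρ ^ (N - m) := by
  have hbN' : ((b * N : ℝ) : ℂ) ≠ 0 := Complex.ofReal_ne_zero.2 hbN.ne'
  rw [mem_sphere_iff_norm, sub_neg_eq_add] at hz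
  rw [eval_expApprox, norm_pow, ← div_self hbN', ← add_div, add_comm, norm_div, hz,
    Complex.norm_of_nonneg hbN.le, mul_div_cancel_right₀ _ hbN.ne']

end ExpApprox

section Weights

/-- The `u`-dependence `e^{-u} a(u) E(u)` of the integrand of a double contour integral; `E` is
either `exp (· / b)` or its approximation `expApprox b m N`. -/
def lineWeight (a E : ℂ → ℂ) (u : ℂ) : ℂ :=
  Complex.exp (-u) * a u * E u

/-- The `v`-dependence `e^v g(v) / (P(v) E(v))` of the integrand of a double contour integral; `E`
is as in `lineWeight`, and the contour has to enclose the roots of the polynomial `P`. -/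
def contourWeight (g : ℂ → ℂ) (P : Polynomial ℂ) (E : ℂ → ℂ) (v : ℂ) : ℂ :=
  Complex.exp v * g v / (P.eval v * E v)

variable {a g E : ℂ → ℂ} {P : Polynomial ℂ} {b : ℝ}

theorem contourWeight_eq (g : ℂ → ℂ) (P : Polynomial ℂ) (E : ℂ → ℂ) (v : ℂ) :
    contourWeight g P E v = Complex.exp v * g v * (P.eval v)⁻¹ * (E v)⁻¹ := by
  rw [contourWeight, div_eq_mul_inv, mul_inv, mul_assoc _ (P.eval v)⁻¹]

theorem tendsto_lineWeight (a : ℂ → ℂ) (b : ℝ) (m : ℕ) (u : ℂ) :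
    Tendsto (fun N => lineWeight a ((expApprox b m N).eval ·) u) atTop
      (𝓝 (lineWeight a (fun z => Complex.exp (z / b)) u)) :=
  (tendsto_eval_expApprox b m u).const_mul _

theorem tendsto_contourWeight (g : ℂ → ℂ) (P : Polynomial ℂ) (b : ℝ) (m : ℕ) (v : ℂ) :
    Tendsto (fun N => contourWeight g P ((expApprox b m N).eval ·) v) atTop
      (𝓝 (contourWeight g P (fun z => Complex.exp (z / b)) v)) := by
  simp only [contourWeight_eq]
  exact ((tendsto_eval_expApprox b m v).inv₀ (Complex.exp_ne_zero _)).const_mul _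

theorem measurable_contourWeight (hg : Continuous g) (P : Polynomial ℂ) (hE : Continuous E) :
    Measurable (contourWeight g P E) := by
  have hg' := hg.measurable
  have hE' := hE.measurable
  have hP : Measurable fun v => P.eval v := P.continuous.measurable
  unfold contourWeight
  fun_prop

-- The factor `e^{u/b}` costs only part of the decay of `e^{-u}`, as `b > 1`.
theorem exists_norm_lineWeight_le (hb : 1 < b) (ha : IsSubexponential a) (m : ℕ) :
    ∃ C, ∀ (N : ℕ) (u : ℝ), 0 ≤ u →
      ‖lineWeight a ((expApprox b m N).eval ·) u‖ ≤ C * Real.exp (-((1 - 1 / b) / 2) * u) := by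
  have hb₀ : 0 < b := by linarith
  obtain ⟨C, hC⟩ := ha ((1 - 1 / b) / 2)
    (half_pos (sub_pos.2 ((div_lt_one hb₀).2 hb)))
  refine ⟨C, fun N u hu => ?_⟩
  have hnorm : ‖(u : ℂ)‖ = u := Complex.norm_of_nonneg hu
  have hexp : ‖Complex.exp (-(u : ℂ))‖ = Real.exp (-u) := by simp [Complex.norm_exp]
  have ha := hC u
  have hE := norm_eval_expApprox_le hb₀ m N u
  rw [hnorm] at ha hE
  calc ‖lineWeight a ((expApprox b m N).eval ·) u‖
      ≤ Real.exp (-u) * (C * Real.exp ((1 - 1 / b) / 2 * u)) * Real.exp (u / b) := by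
        rw [lineWeight, norm_mul, norm_mul, hexp]
        exact mul_le_mul (by gcongr) hE (norm_nonneg _)
          (mul_nonneg (Real.exp_nonneg _) ((norm_nonneg _).trans ha))
    _ = C * Real.exp (-((1 - 1 / b) / 2) * u) := by
        rw [mul_left_comm, mul_assoc, ← Real.exp_add, ← Real.exp_add]
        ring_nf

end Weights

section OuterCircle

variable {b : ℝ} {m N : ℕ} {g : ℂ → ℂ} {P : Polynomial ℂ} {v : ℂ}

/-- The radius of the circle around `-bN` over which the contribution of the large parameters is
estimated. At distance `2bN / (1 + b)` from `-bN` the decay of `e^v` beats the growth of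
`expApprox b m N` at the power `-1`, at the rate `2 * decayRate b`. -/
def outerRadius (b : ℝ) (N : ℕ) : ℝ :=
  2 / (1 + b) * (b * N)

/-- The exponential rate at which the circle around `-bN` contributes less and less as `N` grows. -/
def decayRate (b : ℝ) : ℝ :=
  (b - 1) ^ 2 / (4 * (b + 1))

theorem decayRate_pos (hb : 1 < b) : 0 < decayRate b :=
  div_pos (pow_pos (sub_pos.2 hb) 2) (by linarith)

theorem outerCenter_re_add_outerRadius (hb : 1 < b) (N : ℕ) :
    (-((b * N : ℝ) : ℂ)).re + outerRadius b N = -((b - 1) / (b + 1) * (b * N)) := by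
  have hb₁ : b + 1 ≠ 0 := by linarith
  rw [Complex.neg_re, Complex.ofReal_re, outerRadius, add_comm 1 b]
  field_simp
  ring

theorem re_le_of_mem_outerCircle (hb : 1 < b)
    (hv : v ∈ Metric.closedBall (-((b * N : ℝ) : ℂ)) (outerRadius b N)) :
    v.re ≤ -((b - 1) / (b + 1) * (b * N)) :=
  (re_le_of_mem_closedBall hv).trans_eq (outerCenter_re_add_outerRadius hb N)

theorem outerRadius_nonneg (hb : 1 < b) (N : ℕ) : 0 ≤ outerRadius b N := by
  unfold outerRadius
  positivity

theorem norm_le_of_mem_outerCircle (hb : 1 < b)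
    (hv : v ∈ Metric.closedBall (-((b * N : ℝ) : ℂ)) (outerRadius b N)) :
    ‖v‖ ≤ 2 * (b * N) := by
  have hbN : 0 ≤ b * N := by positivity
  have hcenter : ‖-((b * N : ℝ) : ℂ)‖ = b * N := by
    rw [norm_neg, Complex.norm_of_nonneg hbN]
  have hradius : outerRadius b N ≤ b * N :=
    mul_le_of_le_one_left hbN ((div_le_one (by linarith)).2 (by linarith))
  have hdist := norm_le_norm_add_norm_sub' v (-((b * N : ℝ) : ℂ))
  linarith [mem_closedBall_iff_norm.1 hv]

theorem eventually_forall_outerCircle (hb : 1 < b) {p : ℂ → Prop}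
    (hp : ∀ᶠ z in Bornology.cobounded ℂ, p z) :
    ∀ᶠ N : ℕ in atTop,
      ∀ v ∈ Metric.closedBall (-((b * N : ℝ) : ℂ)) (outerRadius b N), p v := by
  obtain ⟨r, -, hr⟩ := hasBasis_cobounded_norm.eventually_iff.1 hp
  have hdist : Tendsto (fun N : ℕ => (b - 1) / (b + 1) * (b * N)) atTop atTop :=
    (tendsto_natCast_atTop_atTop.const_mul_atTop (by linarith)).const_mul_atTop
      (div_pos (by linarith) (by linarith))
  filter_upwards [hdist.eventually_ge_atTop r] with N hN v hv
  have hre := (neg_le_abs v.re).trans (Complex.abs_re_le_norm v)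
  exact hr (by
    rw [Set.mem_ofPred_eq]
    linarith [re_le_of_mem_outerCircle hb hv])

theorem enclosesRoots_expApprox (hb : 1 < b) (hN : 0 < N) (m : ℕ) :
    EnclosesRoots (expApprox b m N) (-((b * N : ℝ) : ℂ)) (outerRadius b N) where
  radius_nonneg := outerRadius_nonneg hb N
  re_add_radius_neg := by
    rw [outerCenter_re_add_outerRadius hb, neg_lt_zero]
    have : 0 < b - 1 := sub_pos.2 hb
    positivity
  mem_ball z hz := by
    rw [eq_neg_of_isRoot_expApprox hz]
    exact Metric.mem_ball_self (by unfold outerRadius; positivity)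

theorem norm_exp_mul_inv_expApprox_le (hb : 1 < b) (hN : 0 < N) (m : ℕ)
    (hv : v ∈ Metric.sphere (-((b * N : ℝ) : ℂ)) (outerRadius b N)) :
    ‖Complex.exp v‖ * ‖((expApprox b m N).eval v)⁻¹‖ ≤ Real.exp (-(2 * decayRate b * N)) := by
  have : 0 < b + 1 := by linarith
  have hexp : ‖Complex.exp v‖ ≤ Real.exp (-((b - 1) / (b + 1) * (b * N))) := by
    rw [Complex.norm_exp]
    exact Real.exp_le_exp.2 (re_le_of_mem_outerCircle hb (Metric.sphere_subset_closedBall hv))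
  have hinv : ‖((expApprox b m N).eval v)⁻¹‖ ≤ Real.exp ((b - 1) / 2 * N) := by
    calc ‖((expApprox b m N).eval v)⁻¹‖ = ((1 + b) / 2) ^ (N - m) := by
          rw [norm_inv, norm_eval_expApprox_of_mem_sphere (by positivity) hv, ← inv_pow, inv_div]
      _ ≤ ((1 + b) / 2) ^ N := pow_le_pow_right₀ (by linarith) (Nat.sub_le N m)
      _ ≤ Real.exp ((b - 1) / 2) ^ N := by
          gcongr
          linarith [Real.add_one_le_exp ((b - 1) / 2)]
      _ = Real.exp ((b - 1) / 2 * N) := by rw [← Real.exp_nat_mul, mul_comm]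
  refine (mul_le_mul hexp hinv (norm_nonneg _) (Real.exp_nonneg _)).trans_eq ?_
  rw [← Real.exp_add, decayRate]
  congr 1
  field_simp
  ring

theorem exists_eventually_norm_inv_eval_le (P : Polynomial ℂ) :
    ∃ C, ∀ᶠ z in Bornology.cobounded ℂ, ‖(P.eval z)⁻¹‖ ≤ C := by
  rcases lt_or_ge 0 P.degree with hdeg | hdeg
  · refine ⟨1, ?_⟩
    filter_upwards [(P.tendsto_norm_atTop hdeg tendsto_norm_cobounded_atTop).eventually_ge_atTop 1]
      with z hz
    rw [norm_inv]
    exact inv_le_one_of_one_le₀ hz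
  · rw [Polynomial.eq_C_of_degree_le_zero hdeg]
    exact ⟨‖(P.coeff 0)⁻¹‖, Eventually.of_forall fun z => by rw [Polynomial.eval_C]⟩

theorem exists_norm_contourWeight_le_of_mem_outerCircle (hb : 1 < b) (hg : IsSubexponential g)
    (P : Polynomial ℂ) (m : ℕ) :
    ∃ C, ∀ᶠ N : ℕ in atTop, ∀ v ∈ Metric.sphere (-((b * N : ℝ) : ℂ)) (outerRadius b N),
      ‖contourWeight g P ((expApprox b m N).eval ·) v‖ ≤ C * Real.exp (-(decayRate b * N)) := by
  have : 0 < b := by linarith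
  obtain ⟨A, hA⟩ := hg (decayRate b / (2 * b)) (div_pos (decayRate_pos hb) (by linarith))
  have hA₀ : 0 ≤ A := by simpa using (norm_nonneg _).trans (hA 0)
  obtain ⟨B, hB⟩ := exists_eventually_norm_inv_eval_le P
  refine ⟨A * B, ?_⟩
  filter_upwards [eventually_forall_outerCircle hb hB, eventually_gt_atTop 0] with N hBN hN v hv
  have hv' := Metric.sphere_subset_closedBall hv
  have hgv : ‖g v‖ ≤ A * Real.exp (decayRate b * N) := by
    refine (hA v).trans (mul_le_mul_of_nonneg_left (Real.exp_le_exp.2 ?_) hA₀)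
    calc decayRate b / (2 * b) * ‖v‖ ≤ decayRate b / (2 * b) * (2 * (b * N)) := by
          have := (decayRate_pos hb).le
          gcongr
          exact norm_le_of_mem_outerCircle hb hv'
      _ = decayRate b * N := by field_simp
  calc ‖contourWeight g P ((expApprox b m N).eval ·) v‖
      = ‖g v‖ * ‖(P.eval v)⁻¹‖ * (‖Complex.exp v‖ * ‖((expApprox b m N).eval v)⁻¹‖) := by
        rw [contourWeight_eq, norm_mul, norm_mul, norm_mul]
        ring
    _ ≤ (A * Real.exp (decayRate b * N)) * B * Real.exp (-(2 * decayRate b * N)) :=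
        mul_le_mul (mul_le_mul hgv (hBN v hv') (norm_nonneg _) (by positivity))
          (norm_exp_mul_inv_expApprox_le hb hN m hv) (by positivity)
          (mul_nonneg (by positivity) ((norm_nonneg _).trans (hBN v hv')))
    _ = A * B * Real.exp (-(decayRate b * N)) := by
        rw [mul_right_comm A, mul_assoc, ← Real.exp_add]
        ring_nf

-- The radius of the circle and its distance to the line `u ≥ 0` are proportional.
theorem exists_norm_cauchyTransform_outerCircle_le (hb : 1 < b) (hg : IsSubexponential g)
    (P : Polynomial ℂ) (m : ℕ) :
    ∃ C, ∀ᶠ N : ℕ in atTop, ∀ u : ℝ, 0 ≤ u →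
      ‖cauchyTransform (contourWeight g P ((expApprox b m N).eval ·)) (-((b * N : ℝ) : ℂ))
        (outerRadius b N) u‖ ≤ C * Real.exp (-(decayRate b * N)) := by
  obtain ⟨C, hC⟩ := exists_norm_contourWeight_le_of_mem_outerCircle hb hg P m
  refine ⟨2 * Real.pi * (2 / (b - 1)) * C, ?_⟩
  filter_upwards [hC, eventually_gt_atTop 0] with N hCN hN u hu
  have hcircle := enclosesRoots_expApprox hb hN m
  refine (norm_cauchyTransform_le hcircle.radius_nonneg hcircle.re_add_radius_neg hu hCN).trans_eq
    ?_
  have hb₁ : b - 1 ≠ 0 := by linarith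
  have hb₂ : 1 + b ≠ 0 := by linarith
  rw [outerCenter_re_add_outerRadius hb, outerRadius, neg_neg, add_comm b 1]
  field_simp

end OuterCircle

section Convergence

variable {b : ℝ} {m : ℕ} {a g : ℂ → ℂ} {P : Polynomial ℂ} {c : ℂ} {R : ℝ} {cc : ℕ → ℂ} {RR : ℕ → ℝ}

theorem eventually_cauchyTransform_contourWeight_eq_add (hb : 1 < b) (hg : Differentiable ℂ g)
    (hP : EnclosesRoots P c R)
    (hPQ : ∀ᶠ N in atTop, EnclosesRoots (P * expApprox b m N) (cc N) (RR N)) :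
    ∀ᶠ N : ℕ in atTop, ∀ u : ℝ, 0 ≤ u →
      cauchyTransform (contourWeight g P ((expApprox b m N).eval ·)) (cc N) (RR N) u =
        cauchyTransform (contourWeight g P ((expApprox b m N).eval ·)) c R u +
          cauchyTransform (contourWeight g P ((expApprox b m N).eval ·)) (-((b * N : ℝ) : ℂ))
            (outerRadius b N) u := by
  have hfar : ∀ᶠ z in Bornology.cobounded ℂ, z ∉ Metric.closedBall c R :=
    Bornology.isBounded_def.1 Metric.isBounded_closedBall
  filter_upwards [eventually_forall_outerCircle hb hfar, hPQ, eventually_gt_atTop 0]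
    with N hdisj hN hN₀ u hu
  have hQ := enclosesRoots_expApprox hb hN₀ m
  exact cauchyTransform_div_mul_eq_add (Complex.differentiable_exp.mul hg) hN hP hQ
    (fun z hz hz' => hdisj z hz' (Metric.ball_subset_closedBall (hP.mem_ball z hz)))
    (fun z hz => hdisj z (Metric.ball_subset_closedBall (hQ.mem_ball z hz))) hu

theorem exists_norm_contourWeight_le_of_mem_sphere (hb : 0 < b) (hg : Continuous g)
    (hP : EnclosesRoots P c R) (m : ℕ) :
    ∃ C, ∀ᶠ N : ℕ in atTop, ∀ v ∈ Metric.sphere c R,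
      ‖contourWeight g P ((expApprox b m N).eval ·) v‖ ≤ C := by
  have hcont : ContinuousOn (fun v => Complex.exp v * g v * (P.eval v)⁻¹) (Metric.sphere c R) :=
    ContinuousOn.mul (by fun_prop) (P.continuous.continuousOn.inv₀ fun v hv =>
      hP.eval_ne_zero fun hv' => (Metric.mem_ball.1 hv').ne (Metric.mem_sphere.1 hv))
  obtain ⟨C, hC⟩ := (isCompact_sphere c R).exists_bound_of_continuousOn hcont
  refine ⟨C * Real.exp (2 * (‖c‖ + R) / b), ?_⟩
  have hbN : Tendsto (fun N : ℕ => b * N) atTop atTop :=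
    tendsto_natCast_atTop_atTop.const_mul_atTop hb
  filter_upwards [hbN.eventually_ge_atTop (2 * (‖c‖ + R))] with N hN v hv
  have hnorm : ‖v‖ ≤ ‖c‖ + R := by
    rw [← mem_sphere_iff_norm.1 hv]
    exact norm_le_norm_add_norm_sub' v c
  rw [contourWeight_eq, norm_mul]
  refine mul_le_mul (hC v hv) ((norm_inv_eval_expApprox_le hb m (by linarith)).trans ?_)
    (norm_nonneg _) ((norm_nonneg _).trans (hC v hv))
  gcongr

theorem exists_norm_cauchyTransform_contourWeight_le (hb : 1 < b) (hg : Differentiable ℂ g)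
    (hg' : IsSubexponential g) (hP : EnclosesRoots P c R)
    (hPQ : ∀ᶠ N in atTop, EnclosesRoots (P * expApprox b m N) (cc N) (RR N)) :
    ∃ C, ∀ᶠ N : ℕ in atTop, ∀ u : ℝ, 0 ≤ u →
      ‖cauchyTransform (contourWeight g P ((expApprox b m N).eval ·)) (cc N) (RR N) u‖ ≤ C := by
  obtain ⟨A, hA⟩ :=
    exists_norm_contourWeight_le_of_mem_sphere (zero_lt_one.trans hb) hg.continuous hP m
  obtain ⟨B, hB⟩ := exists_norm_cauchyTransform_outerCircle_le hb hg' P m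
  refine ⟨2 * Real.pi * R * (A * (-(c.re + R))⁻¹) + B, ?_⟩
  filter_upwards [hA, hB, eventually_cauchyTransform_contourWeight_eq_add hb hg hP hPQ]
    with N hAN hBN hsplit u hu
  rw [hsplit u hu]
  refine (norm_add_le _ _).trans (add_le_add
    (norm_cauchyTransform_le hP.radius_nonneg hP.re_add_radius_neg hu hAN)
    ((hBN u hu).trans (mul_le_of_le_one_right ?_ ?_)))
  · exact nonneg_of_mul_nonneg_left ((norm_nonneg _).trans (hBN u hu)) (Real.exp_pos _)
  · have := (decayRate_pos hb).le
    exact Real.exp_le_one_iff.2 (neg_nonpos.2 (by positivity))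

theorem tendsto_cauchyTransform_contourWeight (hb : 1 < b) (hg : Differentiable ℂ g)
    (hg' : IsSubexponential g) (hP : EnclosesRoots P c R)
    (hPQ : ∀ᶠ N in atTop, EnclosesRoots (P * expApprox b m N) (cc N) (RR N))
    {u : ℝ} (hu : 0 ≤ u) :
    Tendsto
      (fun N => cauchyTransform (contourWeight g P ((expApprox b m N).eval ·)) (cc N) (RR N) u)
      atTop (𝓝 (cauchyTransform (contourWeight g P fun z => Complex.exp (z / b)) c R u)) := by
  have hinner : Tendsto
      (fun N => cauchyTransform (contourWeight g P ((expApprox b m N).eval ·)) c R u)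
      atTop (𝓝 (cauchyTransform (contourWeight g P fun z => Complex.exp (z / b)) c R u)) := by
    obtain ⟨A, hA⟩ :=
      exists_norm_contourWeight_le_of_mem_sphere (zero_lt_one.trans hb) hg.continuous hP m
    exact tendsto_cauchyTransform hP.radius_nonneg hP.re_add_radius_neg
      (fun N => measurable_contourWeight hg.continuous P (expApprox b m N).continuous) hA
      (fun v _ => tendsto_contourWeight g P b m v) hu
  have houter : Tendsto (fun N : ℕ => cauchyTransform
      (contourWeight g P ((expApprox b m N).eval ·)) (-((b * N : ℝ) : ℂ)) (outerRadius b N) u)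
      atTop (𝓝 0) := by
    obtain ⟨B, hB⟩ := exists_norm_cauchyTransform_outerCircle_le hb hg' P m
    have hdecay : Tendsto (fun N : ℕ => B * Real.exp (-(decayRate b * N))) atTop (𝓝 0) := by
      simpa only [mul_zero, Function.comp_def] using (Real.tendsto_exp_neg_atTop_nhds_zero.comp
        (tendsto_natCast_atTop_atTop.const_mul_atTop (decayRate_pos hb))).const_mul B
    exact squeeze_zero_norm' (hB.mono fun N hN => hN u hu) hdecay
  have hsum := hinner.add houter
  rw [add_zero] at hsum
  exact hsum.congr' ((eventually_cauchyTransform_contourWeight_eq_add hb hg hP hPQ).mono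
    fun N hN => (hN u hu).symm)

theorem tendsto_doubleContour (hb : 1 < b) (ha : Continuous a) (ha' : IsSubexponential a)
    (hg : Differentiable ℂ g) (hg' : IsSubexponential g) (hP : EnclosesRoots P c R)
    (hPQ : ∀ᶠ N in atTop, EnclosesRoots (P * expApprox b m N) (cc N) (RR N)) :
    Tendsto
      (fun N => doubleContour (lineWeight a ((expApprox b m N).eval ·))
        (contourWeight g P ((expApprox b m N).eval ·)) (cc N) (RR N))
      atTop
      (𝓝 (doubleContour (lineWeight a fun z => Complex.exp (z / b))
        (contourWeight g P fun z => Complex.exp (z / b)) c R)) := by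
  obtain ⟨A, hA⟩ := exists_norm_lineWeight_le hb ha' m
  obtain ⟨B, hB⟩ := exists_norm_cauchyTransform_contourWeight_le hb hg hg' hP hPQ
  have hrate : 0 < (1 - 1 / b) / 2 :=
    half_pos (sub_pos.2 ((div_lt_one (zero_lt_one.trans hb)).2 hb))
  refine tendsto_integral_filter_of_dominated_convergence
    (fun u => A * Real.exp (-((1 - 1 / b) / 2) * u) * B) (Eventually.of_forall fun N => ?_) ?_
    (((exp_neg_integrableOn_Ioi 0 hrate).const_mul A).mul_const B) ?_
  · have hline : Continuous fun u : ℝ => lineWeight a ((expApprox b m N).eval ·) u := by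
      unfold lineWeight
      fun_prop
    exact hline.aestronglyMeasurable.mul (stronglyMeasurable_cauchyTransform
      (measurable_contourWeight hg.continuous P (expApprox b m N).continuous)
      (cc N) (RR N)).aestronglyMeasurable
  · filter_upwards [hB] with N hBN
    filter_upwards [ae_restrict_mem measurableSet_Ioi] with u hu
    rw [norm_mul]
    exact mul_le_mul (hA N u (le_of_lt hu)) (hBN u (le_of_lt hu)) (norm_nonneg _)
      ((norm_nonneg _).trans (hA N u (le_of_lt hu)))
  · filter_upwards [ae_restrict_mem measurableSet_Ioi] with u hu
    exact (tendsto_lineWeight a b m u).mul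
      (tendsto_cauchyTransform_contourWeight hb hg hg' hP hPQ (le_of_lt hu))

end Convergence

section Kernel

/-- The parameters of the supercritical regime: `m` sources `α 0, …, α (m - 1)`, the remaining
`N - m` parameters being equal to `B`. -/
def sourceParameters (m : ℕ) (α : ℕ → ℝ) (B : ℝ) (N : ℕ) (j : Fin N) : ℝ :=
  if (j : ℕ) < m then α j else B

/-- The polynomial with roots `-α 0, …, -α (m - 1)`. -/
def sourcePolynomial (m : ℕ) (α : ℕ → ℝ) : Polynomial ℂ :=
  ∏ j ∈ Finset.range m, (Polynomial.X + Polynomial.C (α j : ℂ))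

/-- The factor `₀F₁(ν₀ + 1; -zx)` common to `Psi0` and `Phi0`, as an entire function of `z`. -/
def besselFactor (ν0 : ℕ) (x : ℝ) (z : ℂ) : ℂ :=
  hyp0F1 (ν0 + 1) (-(z * x))

/-- The factors of the kernel that depend on `u`, without the exponentials; the parameters other
than the roots of `P` enter through `expApprox`. -/
def lineFactor (ν0 : ℕ) (P : Polynomial ℂ) (x : ℝ) (u : ℂ) : ℂ :=
  u ^ ν0 * besselFactor ν0 x u * P.eval u

variable {ν0 m N : ℕ} {b : ℝ} {α : ℕ → ℝ} {P : Polynomial ℂ} {c : ℂ} {R : ℝ}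

theorem eval_sourcePolynomial (m : ℕ) (α : ℕ → ℝ) (z : ℂ) :
    (sourcePolynomial m α).eval z = ∏ j ∈ Finset.range m, (z + α j) := by
  simp only [sourcePolynomial, Polynomial.eval_prod, Polynomial.eval_add, Polynomial.eval_X,
    Polynomial.eval_C]

theorem isRoot_sourcePolynomial_iff {z : ℂ} :
    (sourcePolynomial m α).IsRoot z ↔ ∃ j < m, z = -(α j : ℂ) := by
  simp only [Polynomial.IsRoot, eval_sourcePolynomial, Finset.prod_eq_zero_iff, Finset.mem_range,
    add_eq_zero_iff_eq_neg]

theorem enclosesRoots_sourcePolynomial (hR : 0 ≤ R) (hleft : c.re + R < 0)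
    (hencl : ∀ j < m, ‖-(α j : ℂ) - c‖ < R) : EnclosesRoots (sourcePolynomial m α) c R where
  radius_nonneg := hR
  re_add_radius_neg := hleft
  mem_ball z hz := by
    obtain ⟨j, hj, rfl⟩ := isRoot_sourcePolynomial_iff.1 hz
    exact mem_ball_iff_norm.2 (hencl j hj)

theorem AdmCircle.enclosesRoots (hN : m < N)
    (h : AdmCircle N (sourceParameters m α (b * N) N) c R) :
    EnclosesRoots (sourcePolynomial m α * expApprox b m N) c R where
  radius_nonneg := h.1.le
  re_add_radius_neg := h.2.1
  mem_ball z hz := by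
    rw [mem_ball_iff_norm]
    rcases Polynomial.root_mul.1 hz with hz | hz
    · obtain ⟨j, hj, rfl⟩ := isRoot_sourcePolynomial_iff.1 hz
      simpa only [sourceParameters, if_pos hj] using h.2.2 ⟨j, hj.trans hN⟩
    · rw [eq_neg_of_isRoot_expApprox hz]
      simpa only [sourceParameters, if_neg (lt_irrefl m)] using h.2.2 ⟨m, hN⟩

theorem prod_sourceParameters {M : Type*} [CommMonoid M] (hN : m ≤ N) (f : ℝ → M) (α : ℕ → ℝ)
    (B : ℝ) :
    ∏ l, f (sourceParameters m α B N l) = (∏ j ∈ Finset.range m, f (α j)) * f B ^ (N - m) := by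
  simp only [sourceParameters]
  obtain ⟨k, rfl⟩ := Nat.exists_eq_add_of_le hN
  rw [Fin.prod_univ_eq_prod_range (fun i => f (if i < m then α i else B)), Finset.prod_range_add]
  congr 1
  · exact Finset.prod_congr rfl fun i hi => by rw [if_pos (Finset.mem_range.1 hi)]
  · simp

theorem prod_sourceParameters_div (hbN : b * N ≠ 0) (hN : m ≤ N) (α : ℕ → ℝ) (u v : ℂ) :
    ∏ l, (u + sourceParameters m α (b * N) N l) / (v + sourceParameters m α (b * N) N l) =
      (sourcePolynomial m α).eval u / (sourcePolynomial m α).eval v *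
        ((expApprox b m N).eval u / (expApprox b m N).eval v) := by
  have hfactor (w : ℂ) : w + (b * N : ℝ) = (b * N : ℝ) * (1 + w / (b * N : ℝ)) := by
    rw [mul_add, mul_one, mul_div_cancel₀ _ (Complex.ofReal_ne_zero.2 hbN), add_comm]
  rw [prod_sourceParameters hN (fun t : ℝ => (u + t) / (v + t)), Finset.prod_div_distrib,
    eval_sourcePolynomial, eval_sourcePolynomial, eval_expApprox, eval_expApprox, hfactor u,
    hfactor v, mul_div_mul_left _ _ (Complex.ofReal_ne_zero.2 hbN), div_pow]

theorem differentiable_besselFactor (ν0 : ℕ) (y : ℝ) : Differentiable ℂ (besselFactor ν0 y) :=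
  (differentiable_hyp0F1 (by simp)).comp (by fun_prop)

theorem isSubexponential_besselFactor (ν0 : ℕ) (y : ℝ) :
    IsSubexponential (besselFactor ν0 y) := by
  unfold besselFactor
  simpa only [mul_neg] using
    (isSubexponential_hyp0F1 (b := ν0 + 1) (by simp)).comp_mul_right (-(y : ℂ))

theorem continuous_lineFactor (ν0 : ℕ) (P : Polynomial ℂ) (x : ℝ) :
    Continuous (lineFactor ν0 P x) :=
  ((continuous_pow ν0).mul (differentiable_besselFactor ν0 x).continuous).mul P.continuous

theorem isSubexponential_lineFactor (ν0 : ℕ) (P : Polynomial ℂ) (x : ℝ) :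
    IsSubexponential (lineFactor ν0 P x) := by
  unfold lineFactor
  simpa only [Polynomial.eval_pow, Polynomial.eval_X] using
    ((IsSubexponential.polynomial (Polynomial.X ^ ν0)).mul
      (isSubexponential_besselFactor ν0 x)).mul (IsSubexponential.polynomial P)

theorem KN0_sourceParameters (hb : b ≠ 0) (hN : m < N) (ν0 : ℕ) (α : ℕ → ℝ) (c : ℂ) (R x y : ℝ) :
    KN0 ν0 N (sourceParameters m α (b * N) N) c R x y =
      (2 * Real.pi * Complex.I)⁻¹ *
        ((Real.exp x * (y ^ ν0 * Real.exp (-y)) / Real.Gamma (ν0 + 1) ^ 2 : ℝ) : ℂ) *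
        doubleContour
          (lineWeight (lineFactor ν0 (sourcePolynomial m α) x) ((expApprox b m N).eval ·))
          (contourWeight (besselFactor ν0 y) (sourcePolynomial m α) ((expApprox b m N).eval ·))
          c R := by
  have hbN : b * N ≠ 0 := mul_ne_zero hb (Nat.cast_ne_zero.2 (by omega))
  simp only [KN0, doubleContour, cauchyTransform, prod_sourceParameters_div hbN hN.le, mul_assoc]
  simp only [← integral_const_mul, ← circleIntegral.integral_const_mul]
  congr 1 with u
  congr 2 with v
  simp only [lineWeight, contourWeight, lineFactor, besselFactor, Psi0, Phi0, Complex.exp_add,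
    div_eq_mul_inv, mul_inv, Complex.ofReal_mul, ofReal_hyp0F1R, Complex.ofReal_neg]
  push_cast
  ring

theorem tendsto_KN0 (hb : 1 < b) (ν0 : ℕ) {cc : ℕ → ℂ} {RR : ℕ → ℝ}
    (hadm : ∀ᶠ N : ℕ in atTop, AdmCircle N (sourceParameters m α (b * N) N) (cc N) (RR N))
    (hc : EnclosesRoots (sourcePolynomial m α) c R) (x y : ℝ) :
    Tendsto (fun N : ℕ => KN0 ν0 N (sourceParameters m α (b * N) N) (cc N) (RR N) x y) atTop
      (𝓝 ((2 * Real.pi * Complex.I)⁻¹ *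
        ((Real.exp x * (y ^ ν0 * Real.exp (-y)) / Real.Gamma (ν0 + 1) ^ 2 : ℝ) : ℂ) *
        doubleContour
          (lineWeight (lineFactor ν0 (sourcePolynomial m α) x) fun z => Complex.exp (z / b))
          (contourWeight (besselFactor ν0 y) (sourcePolynomial m α) fun z => Complex.exp (z / b))
          c R)) := by
  have hPQ : ∀ᶠ N in atTop,
      EnclosesRoots (sourcePolynomial m α * expApprox b m N) (cc N) (RR N) := by
    filter_upwards [hadm, eventually_gt_atTop m] with N hadmN hN
    exact hadmN.enclosesRoots hN
  refine ((tendsto_doubleContour hb (continuous_lineFactor ν0 _ x)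
    (isSubexponential_lineFactor ν0 _ x) (differentiable_besselFactor ν0 y)
    (isSubexponential_besselFactor ν0 y) hc hPQ).const_mul _).congr' ?_
  filter_upwards [eventually_gt_atTop m] with N hN
  rw [KN0_sourceParameters (by linarith) hN]

end Kernel

section Rescaling

variable {b κ s : ℝ}

theorem eval_sourcePolynomial_mul (m : ℕ) (σ : ℕ → ℝ) (κ : ℝ) (z : ℂ) :
    (sourcePolynomial m fun j => κ * σ j).eval (κ * z) =
      (κ : ℂ) ^ m * (sourcePolynomial m σ).eval z := by
  simp only [eval_sourcePolynomial, Complex.ofReal_mul, ← mul_add, Finset.prod_mul_distrib,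
    Finset.prod_const, Finset.card_range]

theorem EnclosesRoots.sourcePolynomial_mul (hκ : 0 < κ) {m : ℕ} {σ : ℕ → ℝ} {c : ℂ} {R : ℝ}
    (h : EnclosesRoots (sourcePolynomial m σ) c R) :
    EnclosesRoots (sourcePolynomial m fun j => κ * σ j) (κ * c) (κ * R) where
  radius_nonneg := mul_nonneg hκ.le h.radius_nonneg
  re_add_radius_neg := by
    rw [Complex.re_ofReal_mul, ← mul_add]
    exact mul_neg_of_pos_of_neg hκ h.re_add_radius_neg
  mem_ball z hz := by
    obtain ⟨j, hj, rfl⟩ := isRoot_sourcePolynomial_iff.1 hz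
    have hball := h.mem_ball _ (isRoot_sourcePolynomial_iff.2 ⟨j, hj, rfl⟩)
    rw [mem_ball_iff_norm] at hball ⊢
    rw [Complex.ofReal_mul, ← mul_neg, ← mul_sub, norm_mul, Complex.norm_of_nonneg hκ.le]
    gcongr

theorem besselFactor_mul (hsκ : s * κ = 1) (ν0 : ℕ) (y : ℝ) (v : ℂ) :
    besselFactor ν0 (s * y) (κ * v) = besselFactor ν0 y v := by
  have hsκ' : (s : ℂ) * κ = 1 := mod_cast hsκ
  rw [besselFactor, besselFactor, Complex.ofReal_mul]
  congr 2
  linear_combination v * y * hsκ'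

theorem lineFactor_mul (hsκ : s * κ = 1) (ν0 m : ℕ) (σ : ℕ → ℝ) (x : ℝ) (u : ℂ) :
    lineFactor ν0 (sourcePolynomial m fun j => κ * σ j) (s * x) (κ * u) =
      (κ : ℂ) ^ ν0 * (κ : ℂ) ^ m * lineFactor ν0 (sourcePolynomial m σ) x u := by
  rw [lineFactor, lineFactor, besselFactor_mul hsκ, eval_sourcePolynomial_mul, mul_pow]
  ring

-- `κ = b / (b - 1)` is the scale for which `e^{-κu} e^{κu/b} = e^{-u}`.
theorem lineWeight_mul (hsκ : s * κ = 1) (hκb : κ - κ / b = 1) (ν0 m : ℕ) (σ : ℕ → ℝ) (x : ℝ)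
    (u : ℂ) :
    lineWeight (lineFactor ν0 (sourcePolynomial m fun j => κ * σ j) (s * x))
        (fun z => Complex.exp (z / b)) (κ * u) =
      (κ : ℂ) ^ ν0 * (κ : ℂ) ^ m *
        lineWeight (lineFactor ν0 (sourcePolynomial m σ) x) (fun _ => 1) u := by
  have hκb' : (κ : ℂ) - κ / b = 1 := mod_cast hκb
  have hexp : Complex.exp (-(κ * u)) * Complex.exp (κ * u / b) = Complex.exp (-u) := by
    rw [← Complex.exp_add]
    congr 1
    linear_combination -u * hκb'
  simp only [lineWeight, lineFactor_mul hsκ, ← hexp]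
  ring

theorem contourWeight_mul (hsκ : s * κ = 1) (hκb : κ - κ / b = 1) (ν0 m : ℕ) (σ : ℕ → ℝ) (y : ℝ)
    (v : ℂ) :
    contourWeight (besselFactor ν0 (s * y)) (sourcePolynomial m fun j => κ * σ j)
        (fun z => Complex.exp (z / b)) (κ * v) =
      ((κ : ℂ) ^ m)⁻¹ *
        contourWeight (besselFactor ν0 y) (sourcePolynomial m σ) (fun _ => 1) v := by
  have hκb' : (κ : ℂ) - κ / b = 1 := mod_cast hκb
  have hexp : Complex.exp (κ * v) * (Complex.exp (κ * v / b))⁻¹ = Complex.exp v := by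
    rw [← Complex.exp_neg, ← Complex.exp_add]
    congr 1
    linear_combination v * hκb'
  simp only [contourWeight_eq, besselFactor_mul hsκ, eval_sourcePolynomial_mul, mul_inv, ← hexp,
    inv_one, mul_one]
  ring

theorem doubleContour_rescale (hκ : 0 < κ) (hsκ : s * κ = 1) (hκb : κ - κ / b = 1) (ν0 m : ℕ)
    (σ : ℕ → ℝ) (c : ℂ) (R x y : ℝ) :
    doubleContour
        (lineWeight (lineFactor ν0 (sourcePolynomial m fun j => κ * σ j) (s * x))
          fun z => Complex.exp (z / b))
        (contourWeight (besselFactor ν0 (s * y)) (sourcePolynomial m fun j => κ * σ j)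
          fun z => Complex.exp (z / b)) (κ * c) (κ * R) =
      (κ : ℂ) ^ (ν0 + 1) *
        doubleContour (lineWeight (lineFactor ν0 (sourcePolynomial m σ) x) fun _ => 1)
          (contourWeight (besselFactor ν0 y) (sourcePolynomial m σ) fun _ => 1) c R := by
  have hκm : (κ : ℂ) ^ m ≠ 0 := pow_ne_zero m (Complex.ofReal_ne_zero.2 hκ.ne')
  simp only [doubleContour_ofReal_mul _ _ _ _ hκ, lineWeight_mul hsκ hκb,
    contourWeight_mul hsκ hκb, doubleContour_const_mul_const_mul, mul_inv_cancel_right₀ hκm]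
  ring

theorem doubleContour_eq_integral (ν0 m : ℕ) (σ : ℕ → ℝ) (c : ℂ) (R ξ η : ℝ) :
    doubleContour (lineWeight (lineFactor ν0 (sourcePolynomial m σ) ξ) fun _ => 1)
        (contourWeight (besselFactor ν0 η) (sourcePolynomial m σ) fun _ => 1) c R =
      ∫ u in Set.Ioi (0 : ℝ),
        ∮ v in C(c, R),
          hyp0F1 ((ν0 : ℝ) + 1) (-((u * ξ : ℝ) : ℂ)) *
            hyp0F1 ((ν0 : ℝ) + 1) (-(v * (η : ℂ))) *
            (u : ℂ) ^ ν0 * Complex.exp (-(u : ℂ) + v) * ((u : ℂ) - v)⁻¹ *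
            ∏ j ∈ Finset.range m, ((u : ℂ) + (σ j : ℂ)) / (v + (σ j : ℂ)) := by
  simp only [doubleContour, cauchyTransform, ← circleIntegral.integral_const_mul]
  congr 1 with u
  congr 2 with v
  rw [contourWeight_eq, Finset.prod_div_distrib, ← eval_sourcePolynomial, ← eval_sourcePolynomial,
    Complex.exp_add, Complex.ofReal_mul]
  simp only [lineWeight, lineFactor, besselFactor, inv_one]
  ring

theorem rescaled_prefactor_eq (hsκ : s * κ = 1) (ν0 : ℕ) (G ξ η : ℝ) :
    Real.exp (s * (η - ξ)) * s *
        (Real.exp (s * ξ) * ((s * η) ^ ν0 * Real.exp (-(s * η))) / G) * κ ^ (ν0 + 1) =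
      η ^ ν0 / G := by
  have hexp : Real.exp (s * (η - ξ)) * Real.exp (s * ξ) * Real.exp (-(s * η)) = 1 := by
    rw [← Real.exp_add, ← Real.exp_add, Real.exp_eq_one_iff]
    ring
  calc _ = (Real.exp (s * (η - ξ)) * Real.exp (s * ξ) * Real.exp (-(s * η))) *
        (s * κ) ^ (ν0 + 1) * (η ^ ν0 / G) := by
        rw [mul_pow, mul_pow]
        ring
    _ = η ^ ν0 / G := by rw [hexp, hsκ, one_pow, one_mul, one_mul]

theorem tendsto_rescaled_KN0 (hb : 1 < b) (hκ : 0 < κ) (hsκ : s * κ = 1) (hκb : κ - κ / b = 1)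
    (ν0 m : ℕ) (σ : ℕ → ℝ) {cc : ℕ → ℂ} {RR : ℕ → ℝ}
    (hadm : ∀ᶠ N : ℕ in atTop,
      AdmCircle N (sourceParameters m (fun j => κ * σ j) (b * N) N) (cc N) (RR N))
    {c : ℂ} {R : ℝ} (hc : EnclosesRoots (sourcePolynomial m σ) c R) (ξ η : ℝ) :
    Tendsto
      (fun N : ℕ => ((Real.exp (s * (η - ξ)) * s : ℝ) : ℂ) *
        KN0 ν0 N (sourceParameters m (fun j => κ * σ j) (b * N) N) (cc N) (RR N) (s * ξ) (s * η))
      atTop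
      (𝓝 ((2 * Real.pi * Complex.I)⁻¹ * ((η ^ ν0 / Real.Gamma (ν0 + 1) ^ 2 : ℝ) : ℂ) *
        doubleContour (lineWeight (lineFactor ν0 (sourcePolynomial m σ) ξ) fun _ => 1)
          (contourWeight (besselFactor ν0 η) (sourcePolynomial m σ) fun _ => 1) c R)) := by
  have hlim := (tendsto_KN0 hb ν0 hadm (hc.sourcePolynomial_mul hκ) (s * ξ) (s * η)).const_mul
    ((Real.exp (s * (η - ξ)) * s : ℝ) : ℂ)
  rw [doubleContour_rescale hκ hsκ hκb] at hlim
  convert hlim using 2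
  rw [← rescaled_prefactor_eq hsκ ν0 _ ξ η, Complex.ofReal_mul _ (κ ^ (ν0 + 1)),
    Complex.ofReal_mul (_ * s), Complex.ofReal_pow]
  ring

end Rescaling

theorem thm_3_4_general (ν0 m : ℕ) (b : ℝ) (hb : 1 < b) (σ : ℕ → ℝ) (cc : ℕ → ℂ) (RR : ℕ → ℝ)
    (hadm : ∀ᶠ N : ℕ in atTop,
      AdmCircle N (fun j => if (j : ℕ) < m then σ j * b / (b - 1) else b * N) (cc N) (RR N))
    (c' : ℂ) (R' : ℝ) (hR' : 0 < R') (hleft : c'.re + R' < 0)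
    (hencl : ∀ j < m, ‖-(σ j : ℂ) - c'‖ < R') (ξ η : ℝ) :
    Tendsto
      (fun N : ℕ =>
        ((Real.exp ((1 - 1 / b) * (η - ξ)) * (1 - 1 / b) : ℝ) : ℂ) *
          KN0 ν0 N (fun j => if (j : ℕ) < m then σ j * b / (b - 1) else b * N)
            (cc N) (RR N) ((1 - 1 / b) * ξ) ((1 - 1 / b) * η))
      atTop
      (𝓝 ((2 * Real.pi * Complex.I)⁻¹ *
        ((η ^ ν0 / Real.Gamma ((ν0 : ℝ) + 1) ^ 2 : ℝ) : ℂ) *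
        ∫ u in Set.Ioi (0 : ℝ),
          ∮ v in C(c', R'),
            hyp0F1 ((ν0 : ℝ) + 1) (-((u * ξ : ℝ) : ℂ)) *
              hyp0F1 ((ν0 : ℝ) + 1) (-(v * (η : ℂ))) *
              (u : ℂ) ^ ν0 * Complex.exp (-(u : ℂ) + v) * ((u : ℂ) - v)⁻¹ *
              ∏ j ∈ Finset.range m, ((u : ℂ) + (σ j : ℂ)) / (v + (σ j : ℂ)))) := by
  have hb₁ : 0 < b - 1 := sub_pos.2 hb
  obtain ⟨κ, hκ⟩ : ∃ κ, κ = b / (b - 1) := ⟨_, rfl⟩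
  have hκ₀ : 0 < κ := by rw [hκ]; positivity
  have hsκ : (1 - 1 / b) * κ = 1 := by rw [hκ]; field_simp
  have hκb : κ - κ / b = 1 := by rw [← hsκ]; ring
  have hparam (N : ℕ) : (fun j : Fin N => if (j : ℕ) < m then σ j * b / (b - 1) else b * N) =
      sourceParameters m (fun j => κ * σ j) (b * N) N := by
    funext j
    rw [sourceParameters, hκ, div_mul_eq_mul_div, mul_comm b (σ j)]
  simp only [hparam] at hadm ⊢
  rw [← doubleContour_eq_integral]
  exact tendsto_rescaled_KN0 hb hκ₀ hsκ hκb ν0 m σ hadm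
    (enclosesRoots_sourcePolynomial hR'.le hleft hencl) ξ η

/-- **Theorem 3.4** (supercritical regime for `r = 0`: the limit is the shifted-mean
LUE kernel with `m` sources). -/
theorem thm_3_4 (ν0 m : ℕ) (hm : 1 ≤ m) (b : ℝ) (hb : 1 < b)
    (σ : ℕ → ℝ) (hσ : ∀ j < m, 0 < σ j)
    (cc : ℕ → ℂ) (RR : ℕ → ℝ)
    (hadm : ∀ N : ℕ, m < N →
      AdmCircle N (fun j => if (j : ℕ) < m then σ j * b / (b - 1) else b * N)
        (cc N) (RR N))
    (c' : ℂ) (R' : ℝ) (hR' : 0 < R') (hleft : c'.re + R' < 0)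
    (hencl : ∀ j < m, ‖-(σ j : ℂ) - c'‖ < R')
    (ξ η : ℝ) (hξ : 0 < ξ) (hη : 0 < η) :
    Tendsto
      (fun N : ℕ =>
        ((Real.exp ((1 - 1 / b) * (η - ξ)) * (1 - 1 / b) : ℝ) : ℂ) *
          KN0 ν0 N (fun j => if (j : ℕ) < m then σ j * b / (b - 1) else b * N)
            (cc N) (RR N) ((1 - 1 / b) * ξ) ((1 - 1 / b) * η))
      atTop
      (𝓝 ((2 * Real.pi * Complex.I)⁻¹ *
        ((η ^ ν0 / Real.Gamma ((ν0 : ℝ) + 1) ^ 2 : ℝ) : ℂ) *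
        ∫ u in Set.Ioi (0 : ℝ),
          ∮ v in C(c', R'),
            hyp0F1 ((ν0 : ℝ) + 1) (-((u * ξ : ℝ) : ℂ)) *
              hyp0F1 ((ν0 : ℝ) + 1) (-(v * (η : ℂ))) *
              (u : ℂ) ^ ν0 * Complex.exp (-(u : ℂ) + v) * ((u : ℂ) - v)⁻¹ *
              ∏ j ∈ Finset.range m, ((u : ℂ) + (σ j : ℂ)) / (v + (σ j : ℂ)))) :=
  thm_3_4_general ν0 m b hb σ cc RR ((eventually_gt_atTop m).mono hadm) c' R' hR' hleft hencl ξ η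

end
end

section
/- Moment evaluation (2.17). For every a > 0 and every integer i ≥ 1, ∫₀^∞ x^{i−1} Φ(−a;x) dx = (i−1)! · e^{a} · L_{i−1}^{ν₀}(−a) · ∏_{l=1}^r Γ(ν_l+i), where L_n^{ν}(x) := ∑_{k=0}^n (−1)^k binom(n+ν, n−k) x^k/k! is the Laguerre polynomial of degree n and parameter ν. -/
open MeasureTheory Filter Topology

noncomputable section


/-! `Φ(v; ·)` is the multiplicative convolution of its case `r = 0` with `r` Gamma densities. By
Fubini and scaling its moments therefore factor, and the `l`-th density contributes `Γ(ν_l + i)`.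
For `r = 0`, integrating the series of `₀F₁` term by term gives a multiple of
`∑ k, (-v)^k / k! * binom(k + n + ν₀, n)` with `n = i - 1`. Expanding the binomial coefficient by
Vandermonde and summing over `k` turns this into `e^{-v} L_n^{ν₀}(v)`. -/

/-- The function `Φ(v;y)` of the paper in the case `r = 0`, for real `v`: the real counterpart of
`Phi0`, which is convolved with Gamma densities to give `PhiR`. -/
def Phi0R (ν0 : ℕ) (v y : ℝ) : ℝ :=
  y ^ ν0 * Real.exp (-y) / Real.Gamma ((ν0 : ℝ) + 1) * hyp0F1R ((ν0 : ℝ) + 1) (-(v * y))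

/-- The unnormalised joint density `∏ i, t i ^ (s i - 1) e^{-t i}` on the positive orthant of
independent Gamma variables with shape parameters `s i`. -/
def gammaWeight {r : ℕ} (s t : Fin r → ℝ) : ℝ :=
  ∏ i, t i ^ (s i - 1) * Real.exp (-t i)

section Moments

open Real Set
open scoped Nat ENNReal

section Integration

variable {α E : Type*} [MeasurableSpace α] {μ : Measure α} [NormedAddCommGroup E]

lemma integrable_tsum_of_summable_integral_norm [CompleteSpace E] {ι : Type*} [Countable ι]
    {F : ι → α → E} (hF : ∀ i, Integrable (F i) μ) (hsum : Summable fun i ↦ ∫ a, ‖F i a‖ ∂μ) :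
    Integrable (fun a ↦ ∑' i, F i a) μ := by
  have hnorm (i : ι) : ‖(hF i).toL1‖ₑ = ENNReal.ofReal (∫ a, ‖F i a‖ ∂μ) := by
    rw [Integrable.enorm_toL1, ofReal_integral_norm_eq_lintegral_enorm (hF i)]
  have hfinite : ∑' i, ‖(hF i).toL1‖ₑ ≠ ∞ := by
    simpa only [hnorm] using hsum.tsum_ofReal_ne_top
  refine (L1.integrable_coeFn (∑' i, (hF i).toL1)).congr ?_
  filter_upwards [Lp.coeFn_tsum hfinite, ae_all_iff.2 fun i ↦ (hF i).coeFn_toL1] with a ha hFa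
  rw [ha]
  exact tsum_congr hFa

variable [NormedSpace ℝ E] {w T : α → ℝ} {g : ℝ → E}

lemma integral_Ioi_comp_div (g : ℝ → E) {c : ℝ} (hc : 0 < c) :
    ∫ x in Ioi 0, g (x / c) = c • ∫ x in Ioi 0, g x := by
  simpa only [div_eq_mul_inv, zero_mul, inv_inv] using
    integral_comp_mul_right_Ioi g 0 (inv_pos.2 hc)

lemma integrable_smul_comp_div [SFinite μ] (hw : Measurable w) (hT : Measurable T)
    (hg : StronglyMeasurable g) (hT_pos : ∀ᵐ t ∂μ, 0 < T t)
    (hwT : Integrable (fun t ↦ w t * T t) μ) (hg_int : IntegrableOn g (Ioi 0)) :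
    Integrable (fun p : ℝ × α ↦ w p.2 • g (p.1 / T p.2)) ((volume.restrict (Ioi 0)).prod μ) := by
  have hmeas : StronglyMeasurable fun p : ℝ × α ↦ w p.2 • g (p.1 / T p.2) :=
    (hw.comp measurable_snd).stronglyMeasurable.smul
      (hg.comp_measurable (measurable_fst.div (hT.comp measurable_snd)))
  refine (integrable_prod_iff' hmeas.aestronglyMeasurable).2 ⟨?_, ?_⟩
  · filter_upwards [hT_pos] with t ht
    simp only [div_eq_mul_inv]
    exact Integrable.smul (w t) <|
      (integrableOn_Ioi_comp_mul_right_iff g 0 (inv_pos.2 ht)).2 (by rwa [zero_mul])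
  · refine (hwT.norm.mul_const (∫ x in Ioi 0, ‖g x‖)).congr ?_
    filter_upwards [hT_pos] with t ht
    simp only [norm_smul, norm_mul]
    rw [integral_const_mul, integral_Ioi_comp_div (fun x ↦ ‖g x‖) ht, smul_eq_mul,
      norm_of_nonneg ht.le, mul_assoc]

lemma integral_integral_smul_comp_div [CompleteSpace E] [SFinite μ] (hw : Measurable w)
    (hT : Measurable T) (hg : StronglyMeasurable g) (hT_pos : ∀ᵐ t ∂μ, 0 < T t)
    (hwT : Integrable (fun t ↦ w t * T t) μ) (hg_int : IntegrableOn g (Ioi 0)) :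
    ∫ x in Ioi 0, ∫ t, w t • g (x / T t) ∂μ = (∫ t, w t * T t ∂μ) • ∫ x in Ioi 0, g x := by
  rw [integral_integral_swap (integrable_smul_comp_div hw hT hg hT_pos hwT hg_int),
    ← integral_smul_const]
  refine integral_congr_ae ?_
  filter_upwards [hT_pos] with t ht
  rw [integral_smul, integral_Ioi_comp_div g ht, smul_smul]

end Integration

section GammaMoments

variable {s : ℝ} {c : ℕ → ℝ}

lemma integrableOn_rpow_mul_exp_neg (hs : 0 < s) :
    IntegrableOn (fun x : ℝ ↦ x ^ (s - 1) * exp (-x)) (Ioi 0) := by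
  simpa only [mul_comm] using GammaIntegral_convergent hs

lemma integral_rpow_mul_exp_neg (hs : 0 < s) :
    ∫ x in Ioi (0 : ℝ), x ^ (s - 1) * exp (-x) = Gamma s := by
  simpa only [mul_comm] using (Gamma_eq_integral hs).symm

lemma rpow_mul_exp_neg_mul_mul_pow {x : ℝ} (hx : 0 < x) (s c : ℝ) (k : ℕ) :
    x ^ (s - 1) * exp (-x) * (c * x ^ k) = c * (x ^ (s + k - 1) * exp (-x)) := by
  rw [add_sub_right_comm, rpow_add_natCast hx.ne']
  ring

lemma integrableOn_rpow_mul_exp_neg_mul_mul_pow (hs : 0 < s) (c : ℝ) (k : ℕ) :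
    IntegrableOn (fun x : ℝ ↦ x ^ (s - 1) * exp (-x) * (c * x ^ k)) (Ioi 0) :=
  IntegrableOn.congr_fun (Integrable.const_mul (integrableOn_rpow_mul_exp_neg (by positivity)) c)
    (fun _ hx ↦ (rpow_mul_exp_neg_mul_mul_pow hx s c k).symm) measurableSet_Ioi

lemma integral_rpow_mul_exp_neg_mul_mul_pow (hs : 0 < s) (c : ℝ) (k : ℕ) :
    ∫ x in Ioi (0 : ℝ), x ^ (s - 1) * exp (-x) * (c * x ^ k) = c * Gamma (s + k) := by
  rw [setIntegral_congr_fun measurableSet_Ioi fun x hx ↦ rpow_mul_exp_neg_mul_mul_pow hx s c k,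
    integral_const_mul, integral_rpow_mul_exp_neg (by positivity)]

lemma summable_integral_norm_rpow_mul_exp_neg_mul_mul_pow (hs : 0 < s)
    (hc : Summable fun k ↦ |c k| * Gamma (s + k)) :
    Summable fun k ↦ ∫ x in Ioi (0 : ℝ), ‖x ^ (s - 1) * exp (-x) * (c k * x ^ k)‖ := by
  refine hc.congr fun k ↦ ?_
  rw [← integral_rpow_mul_exp_neg_mul_mul_pow hs]
  refine setIntegral_congr_fun measurableSet_Ioi fun x hx ↦ ?_
  have hx : 0 < x := hx
  simp only [norm_mul, norm_eq_abs, abs_exp, abs_of_pos (rpow_pos_of_pos hx _),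
    abs_of_pos (pow_pos hx k)]

lemma integrableOn_rpow_mul_exp_neg_mul_tsum (hs : 0 < s)
    (hc : Summable fun k ↦ |c k| * Gamma (s + k)) :
    IntegrableOn (fun x : ℝ ↦ x ^ (s - 1) * exp (-x) * ∑' k, c k * x ^ k) (Ioi 0) := by
  simp only [← tsum_mul_left]
  exact integrable_tsum_of_summable_integral_norm
    (fun k ↦ integrableOn_rpow_mul_exp_neg_mul_mul_pow hs (c k) k)
    (summable_integral_norm_rpow_mul_exp_neg_mul_mul_pow hs hc)

lemma hasSum_integral_rpow_mul_exp_neg_mul_tsum (hs : 0 < s)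
    (hc : Summable fun k ↦ |c k| * Gamma (s + k)) :
    HasSum (fun k ↦ c k * Gamma (s + k))
      (∫ x in Ioi (0 : ℝ), x ^ (s - 1) * exp (-x) * ∑' k, c k * x ^ k) := by
  simp only [← tsum_mul_left, ← integral_rpow_mul_exp_neg_mul_mul_pow hs]
  exact hasSum_integral_of_summable_integral_norm
    (fun k ↦ integrableOn_rpow_mul_exp_neg_mul_mul_pow hs (c k) k)
    (summable_integral_norm_rpow_mul_exp_neg_mul_mul_pow hs hc)

end GammaMoments

section Laguerre

lemma hasSum_pow_div_factorial_mul_choose (x : ℝ) (j : ℕ) :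
    HasSum (fun k : ℕ ↦ x ^ k / k ! * k.choose j) (x ^ j / j ! * exp x) := by
  have hexp : HasSum (fun m : ℕ ↦ x ^ m / m !) (exp x) := by
    rw [exp_eq_exp_ℝ]
    exact NormedSpace.expSeries_div_hasSum_exp x
  have hlow : ∑ k ∈ Finset.range j, x ^ k / k ! * k.choose j = 0 :=
    Finset.sum_eq_zero fun k hk ↦ by simp [Nat.choose_eq_zero_of_lt (Finset.mem_range.1 hk)]
  rw [← hasSum_nat_add_iff' j, hlow, sub_zero]
  refine (hexp.mul_left (x ^ j / j !)).congr_fun fun m ↦ ?_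
  rw [← Nat.choose_symm_add, Nat.cast_add_choose ℝ, pow_add]
  field_simp

lemma hasSum_pow_div_factorial_mul_add_choose (n ν : ℕ) (x : ℝ) :
    HasSum (fun k : ℕ ↦ (-x) ^ k / k ! * ((k + (n + ν)).choose n : ℝ))
      (exp (-x) * laguerreL n ν x) := by
  have hvandermonde (k : ℕ) : ((k + (n + ν)).choose n : ℝ) =
      ∑ j ∈ Finset.range (n + 1), (k.choose j : ℝ) * (n + ν).choose (n - j) := by
    rw [Nat.add_choose_eq, Finset.Nat.sum_antidiagonal_eq_sum_range_succ_mk]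
    push_cast
    rfl
  have hsum := hasSum_sum (s := Finset.range (n + 1)) fun j _ ↦
    (hasSum_pow_div_factorial_mul_choose (-x) j).mul_right ((n + ν).choose (n - j) : ℝ)
  convert! hsum using 1
  · ext k
    simp only [hvandermonde, Finset.mul_sum, mul_assoc]
  · simp only [laguerreL, Finset.mul_sum]
    refine Finset.sum_congr rfl fun j _ ↦ ?_
    rw [neg_pow x j]
    ring

end Laguerre

section PhiZero

lemma pow_mul_Phi0R_eq (n ν0 : ℕ) (v x : ℝ) :
    x ^ n * Phi0R ν0 v x = x ^ (((n + ν0 + 1 : ℕ) : ℝ) - 1) * exp (-x) *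
      ∑' k : ℕ, (-v) ^ k / (k ! * (k + ν0)! : ℝ) * x ^ k := by
  have hterm (k : ℕ) : Gamma (ν0 + 1) * (-(v * x)) ^ k / (k ! * Gamma (ν0 + 1 + k)) =
      Gamma (ν0 + 1) * ((-v) ^ k / (k ! * (k + ν0)!) * x ^ k) := by
    rw [← Gamma_nat_eq_factorial (k + ν0), ← neg_mul, mul_pow]
    push_cast
    rw [add_comm (ν0 + 1 : ℝ), add_assoc]
    ring
  have hΓ : Gamma (ν0 + 1) ≠ 0 := (Gamma_pos_of_pos (by positivity)).ne'
  simp only [Phi0R, hyp0F1R, hterm, tsum_mul_left]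
  rw [Nat.cast_succ, add_sub_cancel_right, rpow_natCast, pow_add]
  field_simp

lemma pow_div_factorial_mul_factorial_mul_Gamma (n ν0 k : ℕ) (x : ℝ) :
    x ^ k / (k ! * (k + ν0)! : ℝ) * Gamma ((n + ν0 + 1 : ℕ) + k) =
      n ! * (x ^ k / k ! * ((k + (n + ν0)).choose n : ℝ)) := by
  have hΓ : Gamma ((n + ν0 + 1 : ℕ) + k) = (n + (k + ν0))! := by
    rw [← Gamma_nat_eq_factorial]
    push_cast
    ring_nf
  rw [hΓ, Nat.add_left_comm k n ν0, Nat.cast_add_choose ℝ]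
  field_simp

lemma summable_abs_pow_div_factorial_mul_Gamma (n ν0 : ℕ) (v : ℝ) :
    Summable fun k : ℕ ↦ |(-v) ^ k / (k ! * (k + ν0)! : ℝ)| * Gamma ((n + ν0 + 1 : ℕ) + k) := by
  refine ((hasSum_pow_div_factorial_mul_add_choose n ν0 (-|v|)).summable.mul_left
    (n ! : ℝ)).congr fun k ↦ ?_
  rw [← pow_div_factorial_mul_factorial_mul_Gamma, neg_neg, abs_div, abs_pow, abs_neg,
    abs_of_pos (by positivity : (0 : ℝ) < k ! * (k + ν0)!)]

lemma integrableOn_pow_mul_Phi0R (n ν0 : ℕ) (v : ℝ) :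
    IntegrableOn (fun x ↦ x ^ n * Phi0R ν0 v x) (Ioi 0) := by
  simp only [pow_mul_Phi0R_eq]
  exact integrableOn_rpow_mul_exp_neg_mul_tsum (by positivity)
    (summable_abs_pow_div_factorial_mul_Gamma n ν0 v)

lemma integral_pow_mul_Phi0R (n ν0 : ℕ) (v : ℝ) :
    ∫ x in Ioi 0, x ^ n * Phi0R ν0 v x = n ! * exp (-v) * laguerreL n ν0 v := by
  have hgamma := hasSum_integral_rpow_mul_exp_neg_mul_tsum (by positivity)
    (summable_abs_pow_div_factorial_mul_Gamma n ν0 v)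
  have hlaguerre := (hasSum_pow_div_factorial_mul_add_choose n ν0 v).mul_left (n ! : ℝ)
  simp only [pow_div_factorial_mul_factorial_mul_Gamma] at hgamma
  simp only [pow_mul_Phi0R_eq]
  rw [hgamma.unique hlaguerre, mul_assoc]

lemma measurable_Phi0R (ν0 : ℕ) (v : ℝ) : Measurable (Phi0R ν0 v) := by
  have : Measurable (hyp0F1R (ν0 + 1)) := Measurable.tsum fun k ↦ by fun_prop
  unfold Phi0R
  fun_prop

end PhiZero

section GammaWeight

variable {r : ℕ} {s t : Fin r → ℝ}

lemma posOrth_eq_pi (r : ℕ) : posOrth r = univ.pi fun _ ↦ Ioi 0 := by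
  ext t
  simp [posOrth]

lemma measurableSet_posOrth (r : ℕ) : MeasurableSet (posOrth r) := by
  rw [posOrth_eq_pi]
  exact MeasurableSet.univ_pi fun _ ↦ measurableSet_Ioi

lemma volume_restrict_posOrth (r : ℕ) :
    volume.restrict (posOrth r) = Measure.pi fun _ : Fin r ↦ volume.restrict (Ioi (0 : ℝ)) := by
  rw [posOrth_eq_pi, volume_pi, Measure.restrict_pi_pi]

lemma prod_pos_of_mem_posOrth (ht : t ∈ posOrth r) : 0 < ∏ i, t i :=
  Finset.prod_pos fun i _ ↦ ht i

lemma measurable_gammaWeight (s : Fin r → ℝ) : Measurable (gammaWeight s) := by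
  unfold gammaWeight
  fun_prop

lemma gammaWeight_mul_prod_pow (s : Fin r → ℝ) (n : ℕ) (ht : t ∈ posOrth r) :
    gammaWeight s t * (∏ i, t i) ^ n = gammaWeight (fun i ↦ s i + n) t := by
  simp only [gammaWeight, ← Finset.prod_pow, ← Finset.prod_mul_distrib]
  refine Finset.prod_congr rfl fun i _ ↦ ?_
  rw [add_sub_right_comm, rpow_add_natCast (ht i).ne', mul_right_comm]

lemma integrableOn_gammaWeight (hs : ∀ i, 0 < s i) : IntegrableOn (gammaWeight s) (posOrth r) := by
  rw [IntegrableOn, volume_restrict_posOrth]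
  exact Integrable.fintype_prod fun i ↦ integrableOn_rpow_mul_exp_neg (hs i)

lemma integral_gammaWeight (hs : ∀ i, 0 < s i) :
    ∫ t in posOrth r, gammaWeight s t = ∏ i, Gamma (s i) := by
  simp only [gammaWeight, volume_restrict_posOrth]
  rw [integral_fintype_prod_eq_prod fun i (x : ℝ) ↦ x ^ (s i - 1) * exp (-x)]
  exact Finset.prod_congr rfl fun i _ ↦ integral_rpow_mul_exp_neg (hs i)

end GammaWeight

lemma PhiR_eq_integral_gammaWeight_mul_Phi0R (r ν0 : ℕ) (ν : Fin r → ℕ) (v y : ℝ) :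
    PhiR r ν0 ν v y =
      ∫ t in posOrth r, gammaWeight (fun i ↦ (ν i : ℝ)) t * Phi0R ν0 v (y / ∏ i, t i) := by
  rw [PhiR, ← integral_const_mul]
  refine integral_congr_ae (.of_forall fun _ ↦ ?_)
  simp only [gammaWeight, Phi0R]
  ring

lemma pow_mul_PhiR (r ν0 : ℕ) (ν : Fin r → ℕ) (n : ℕ) (v x : ℝ) :
    x ^ n * PhiR r ν0 ν v x = ∫ t in posOrth r, gammaWeight (fun i ↦ (ν i + n : ℝ)) t *
      ((x / ∏ i, t i) ^ n * Phi0R ν0 v (x / ∏ i, t i)) := by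
  rw [PhiR_eq_integral_gammaWeight_mul_Phi0R, ← integral_const_mul]
  refine setIntegral_congr_fun (measurableSet_posOrth r) fun t ht ↦ ?_
  have hx : x ^ n = (∏ i, t i) ^ n * (x / ∏ i, t i) ^ n := by
    rw [← mul_pow, mul_div_cancel₀ _ (prod_pos_of_mem_posOrth ht).ne']
  simp only [← gammaWeight_mul_prod_pow _ n ht]
  rw [hx]
  ring

lemma integral_pow_mul_PhiR (r ν0 : ℕ) (ν : Fin r → ℕ) (n : ℕ) (v : ℝ) :
    ∫ x in Ioi 0, x ^ n * PhiR r ν0 ν v x =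
      (∏ l, Gamma (ν l + n + 1)) * ∫ x in Ioi 0, x ^ n * Phi0R ν0 v x := by
  have hweight (t : Fin r → ℝ) (ht : t ∈ posOrth r) :
      gammaWeight (fun i ↦ (ν i + n : ℝ)) t * ∏ i, t i =
        gammaWeight (fun i ↦ (ν i + n + 1 : ℝ)) t := by
    simpa using gammaWeight_mul_prod_pow (fun i ↦ (ν i + n : ℝ)) 1 ht
  have hshape (i : Fin r) : 0 < (ν i + n + 1 : ℝ) := by positivity
  have hweight_int : IntegrableOn (fun t ↦ gammaWeight (fun i ↦ (ν i + n : ℝ)) t * ∏ i, t i)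
      (posOrth r) :=
    (integrableOn_gammaWeight hshape).congr_fun (fun t ht ↦ (hweight t ht).symm)
      (measurableSet_posOrth r)
  have hmeas : Measurable fun x ↦ x ^ n * Phi0R ν0 v x :=
    (measurable_id.pow_const n).mul (measurable_Phi0R ν0 v)
  have hfubini := integral_integral_smul_comp_div (measurable_gammaWeight fun i ↦ (ν i + n : ℝ))
    (by fun_prop) hmeas.stronglyMeasurable
    (ae_restrict_of_forall_mem (measurableSet_posOrth r) fun _ ↦ prod_pos_of_mem_posOrth)
    hweight_int (integrableOn_pow_mul_Phi0R n ν0 v)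
  simp only [smul_eq_mul, ← pow_mul_PhiR] at hfubini
  rw [hfubini, setIntegral_congr_fun (measurableSet_posOrth r) hweight,
    integral_gammaWeight hshape]

theorem moment_2_17_general (r ν0 : ℕ) (ν : Fin r → ℕ) (n : ℕ) (v : ℝ) :
    ∫ x in Ioi 0, x ^ n * PhiR r ν0 ν v x =
      n ! * exp (-v) * laguerreL n ν0 v * ∏ l, Gamma (ν l + n + 1) := by
  rw [integral_pow_mul_PhiR, integral_pow_mul_Phi0R, mul_comm]

end Moments

/-- **Moment evaluation (2.17).** -/
theorem moment_2_17 (r ν0 : ℕ) (ν : Fin r → ℕ) (a : ℝ) (ha : 0 < a)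
    (i : ℕ) (hi : 1 ≤ i) :
    ∫ x in Set.Ioi (0 : ℝ), x ^ (i - 1) * PhiR r ν0 ν (-a) x =
      (Nat.factorial (i - 1) : ℝ) * Real.exp a * laguerreL (i - 1) ν0 (-a) *
        ∏ l, Real.Gamma ((ν l : ℝ) + i) := by
  obtain ⟨n, rfl⟩ := Nat.exists_eq_add_of_le' hi
  simpa only [neg_neg, Nat.add_sub_cancel, Nat.cast_succ, add_assoc]
    using moment_2_17_general r ν0 ν n (-a)

end
end

section
/- Theorem 3.6(ii), characteristic-polynomial part (critical-regime asymptotics of the average characteristic polynomial, with normalization written out explicitly). Fix m ∈ ℕ, τ ∈ ℝ, σ₁,…,σ_m > 0 and ξ > 0. For integers N with √N > τ and N > m, set a_N := N(1−τ/√N)^{−1} and D_N := ∫₀^∞ u^{ν₀} e^{−u} Ψ(u; ξ/√N) (u+a_N)^{N−m} ∏_{j=1}^m (u+√N σ_j) du. Then lim_{N→∞} N^{−N−(ν₀−m+1)/2} e^{−√N τ − τ²/2} D_N = ∫₀^∞ u^{ν₀} e^{−τu−u²/2} G₁(ξu) ∏_{j=1}^m (u+σ_j) du (the function Γ^{(m+1)}(ξ;σ₁,…,σ_m)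 of the paper). -/
open MeasureTheory Filter Topology

noncomputable section


/-! The substitution `u = √N s` turns the factor `e^{-u} (u + a_N)^{N-m}` of the integrand into a
multiple of `e^{-√N s} ((1 - τ/√N)⁻¹ + s/√N)^{N-m}`, and the second-order expansion
`(1 + y) e^{-y} = 1 - y²/2 + o(y²)` gives its Gaussian limit. At the same time the `k`-th term of
`Ψ(√N s; ξ/√N)` keeps only the top coefficient of `₁F₁`, so the series becomes that of `G₁(ξs)`.
Both limits pass under the integral by dominated convergence: `|Ψ(√N s; ξ/√N)| ≤ e^{|ξ|(1+s)}`, and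
the tangent of `log` at `1 + L/√N` bounds the first factor by a multiple of `e^{-Ls/2}`,
with `L` as large as we like. -/

section Pochhammer

lemma poch_succ (a : ℝ) (j : ℕ) : poch a (j + 1) = poch a j * (a + j) :=
  Finset.prod_range_succ _ _

lemma poch_neg_natCast (k j : ℕ) : poch (-(k : ℝ)) j = (-1) ^ j * (k.descFactorial j : ℝ) := by
  rw [← descPochhammer_eval_eq_descFactorial, descPochhammer_eval_eq_prod_range, poch]
  simp only [neg_add_eq_sub, ← neg_sub (k : ℝ), Finset.prod_neg, Finset.card_range]

lemma one_le_poch {a : ℝ} (ha : 1 ≤ a) (j : ℕ) : 1 ≤ poch a j :=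
  Finset.one_le_prod fun i _ => le_add_of_le_of_nonneg ha i.cast_nonneg

lemma poch_mul_Gamma {a : ℝ} (ha : 0 < a) (j : ℕ) :
    poch a j * Real.Gamma a = Real.Gamma (a + j) := by
  induction j with
  | zero => simp [poch]
  | succ j ih =>
    rw [poch_succ, mul_right_comm, ih, Nat.cast_succ, ← add_assoc,
      Real.Gamma_add_one (by positivity), mul_comm]

lemma one_le_Gamma_natCast_add_one_add (n k : ℕ) : 1 ≤ Real.Gamma ((n : ℝ) + 1 + k) := by
  rw [add_right_comm, ← Nat.cast_add, Real.Gamma_nat_eq_factorial]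
  exact_mod_cast Nat.factorial_pos (n + k)

lemma abs_one_div_Gamma_natCast_le_one (n k : ℕ) : |1 / Real.Gamma ((n : ℝ) + 1 + k)| ≤ 1 := by
  have hΓ := one_le_Gamma_natCast_add_one_add n k
  rw [abs_of_pos (by positivity)]
  exact div_le_one_of_le₀ hΓ (by positivity)

end Pochhammer

section TerminatingHypergeometric

lemma abs_hyp1F1T_le {b : ℝ} (hb : 1 ≤ b) (k : ℕ) (u : ℝ) : |hyp1F1T k b u| ≤ (1 + |u|) ^ k := by
  have hcoeff (j : ℕ) : |poch (-(k : ℝ)) j / (poch b j * j.factorial)| ≤ k.choose j := by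
    have hpoch := one_le_poch hb j
    rw [poch_neg_natCast, Nat.descFactorial_eq_factorial_mul_choose, abs_div, abs_mul,
      abs_neg_one_pow, one_mul, Nat.abs_cast, abs_of_pos (by positivity),
      div_le_iff₀ (by positivity)]
    push_cast
    nlinarith [mul_nonneg (Nat.cast_nonneg (α := ℝ) j.factorial) (Nat.cast_nonneg (k.choose j))]
  calc |hyp1F1T k b u|
      ≤ ∑ j ∈ Finset.range (k + 1), |poch (-(k : ℝ)) j / (poch b j * j.factorial) * u ^ j| :=
        Finset.abs_sum_le_sum_abs _ _
    _ ≤ ∑ j ∈ Finset.range (k + 1), k.choose j * |u| ^ j := by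
        gcongr with j
        rw [abs_mul, abs_pow]
        gcongr
        exact hcoeff j
    _ = (1 + |u|) ^ k := by
        rw [add_comm 1 |u|, add_pow]
        exact Finset.sum_congr rfl fun j _ => by ring

lemma continuous_hyp1F1T (k : ℕ) (b : ℝ) : Continuous (hyp1F1T k b) := by
  unfold hyp1F1T
  fun_prop

lemma pow_mul_hyp1F1T (k : ℕ) (b u x : ℝ) :
    x ^ k * hyp1F1T k b u = ∑ j ∈ Finset.range (k + 1),
      poch (-(k : ℝ)) j / (poch b j * j.factorial) * (x * u) ^ j * x ^ (k - j) := by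
  rw [hyp1F1T, Finset.mul_sum]
  refine Finset.sum_congr rfl fun j hj => ?_
  rw [← pow_sub_mul_pow x (Nat.lt_succ_iff.mp (Finset.mem_range.mp hj))]
  ring

lemma tendsto_pow_mul_hyp1F1T {ι : Type*} {l : Filter ι} {x u : ι → ℝ} {z : ℝ}
    (hx : Tendsto x l (𝓝 0)) (hxu : Tendsto (fun i => x i * u i) l (𝓝 z)) (k : ℕ) (b : ℝ) :
    Tendsto (fun i => x i ^ k * hyp1F1T k b (u i)) l (𝓝 ((-z) ^ k / poch b k)) := by
  have hlim : Tendsto (fun i => x i ^ k * hyp1F1T k b (u i)) l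
      (𝓝 (∑ j ∈ Finset.range (k + 1),
        poch (-(k : ℝ)) j / (poch b j * j.factorial) * z ^ j * 0 ^ (k - j))) := by
    simp only [pow_mul_hyp1F1T]
    exact tendsto_finsetSum _ fun j _ => ((hxu.pow j).const_mul _).mul (hx.pow (k - j))
  convert hlim using 2
  rw [Finset.sum_range_succ, Finset.sum_eq_zero, zero_add, Nat.sub_self, poch_neg_natCast,
    Nat.descFactorial_self, mul_div_mul_right _ _ (by positivity), neg_pow]
  · ring
  · intro j hj
    rw [zero_pow (Nat.sub_ne_zero_of_lt (Finset.mem_range.mp hj)), mul_zero]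

end TerminatingHypergeometric

section PsiSeries

variable (r ν0 : ℕ) (ν : Fin r → ℕ)

/-- The `k`-th term of the series for `Ψ(u;x)`, including the normalization `1/Γ(ν₀+1)`. -/
def psiTerm (u x : ℝ) (k : ℕ) : ℝ :=
  1 / Real.Gamma ((ν0 : ℝ) + 1) * (x ^ k / k.factorial * hyp1F1T k ((ν0 : ℝ) + 1) u *
    ∏ l, 1 / Real.Gamma ((ν l : ℝ) + 1 + k))

lemma Psi_eq_tsum_psiTerm (u x : ℝ) : Psi r ν0 ν u x = ∑' k, psiTerm r ν0 ν u x k :=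
  tsum_mul_left.symm

lemma abs_psiTerm_le (u x : ℝ) (k : ℕ) :
    |psiTerm r ν0 ν u x k| ≤ (|x| * (1 + |u|)) ^ k / k.factorial := by
  have hΓ : |1 / Real.Gamma ((ν0 : ℝ) + 1)| ≤ 1 := by
    simpa using abs_one_div_Gamma_natCast_le_one ν0 0
  have hprod : |∏ l, 1 / Real.Gamma ((ν l : ℝ) + 1 + k)| ≤ 1 := by
    rw [Finset.abs_prod]
    exact Finset.prod_le_one (fun _ _ => abs_nonneg _)
      fun l _ => abs_one_div_Gamma_natCast_le_one (ν l) k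
  have hhyp : |hyp1F1T k ((ν0 : ℝ) + 1) u| ≤ (1 + |u|) ^ k := abs_hyp1F1T_le (by simp) k u
  rw [psiTerm, abs_mul, abs_mul, abs_mul, abs_div (x ^ k), abs_pow, Nat.abs_cast]
  calc _ ≤ 1 * (|x| ^ k / k.factorial * (1 + |u|) ^ k * 1) := by gcongr
    _ = (|x| * (1 + |u|)) ^ k / k.factorial := by rw [mul_pow]; ring

lemma abs_Psi_le (u x : ℝ) : |Psi r ν0 ν u x| ≤ Real.exp (|x| * (1 + |u|)) := by
  rw [Psi_eq_tsum_psiTerm, Real.exp_eq_exp_ℝ]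
  exact tsum_of_norm_bounded (f := psiTerm r ν0 ν u x)
    (NormedSpace.expSeries_div_hasSum_exp (|x| * (1 + |u|))) (abs_psiTerm_le r ν0 ν u x)

variable {r ν0 ν}

lemma tendsto_Psi_of_tendsto_psiTerm {ι : Type*} {l : Filter ι} {u x : ι → ℝ} {g : ℕ → ℝ} {R : ℝ}
    (hR : ∀ᶠ i in l, |x i| * (1 + |u i|) ≤ R)
    (hterm : ∀ k, Tendsto (fun i => psiTerm r ν0 ν (u i) (x i) k) l (𝓝 (g k))) :
    Tendsto (fun i => Psi r ν0 ν (u i) (x i)) l (𝓝 (∑' k, g k)) := by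
  simp only [Psi_eq_tsum_psiTerm]
  refine tendsto_tsum_of_dominated_convergence (Real.summable_pow_div_factorial R) hterm ?_
  filter_upwards [hR] with i hi k
  refine (abs_psiTerm_le r ν0 ν (u i) (x i) k).trans ?_
  gcongr

variable (r ν0 ν)

lemma continuous_Psi (x : ℝ) : Continuous fun u => Psi r ν0 ν u x := by
  refine continuous_iff_continuousAt.mpr fun u₀ => ?_
  have hterm (k : ℕ) : Continuous fun u => psiTerm r ν0 ν u x k := by
    have := continuous_hyp1F1T k ((ν0 : ℝ) + 1)
    unfold psiTerm
    fun_prop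
  have hbound : ∀ᶠ u in 𝓝 u₀, |x| * (1 + |u|) ≤ |x| * (1 + |u₀|) + 1 :=
    Tendsto.eventually_le_const (lt_add_one _)
      (Continuous.tendsto (by fun_prop : Continuous fun u : ℝ => |x| * (1 + |u|)) u₀)
  rw [ContinuousAt, Psi_eq_tsum_psiTerm]
  exact tendsto_Psi_of_tendsto_psiTerm hbound fun k => (hterm k).tendsto u₀

variable {ι : Type*} {l : Filter ι} {x u : ι → ℝ} {z : ℝ}

lemma tendsto_psiTerm (hx : Tendsto x l (𝓝 0)) (hxu : Tendsto (fun i => x i * u i) l (𝓝 z))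
    (k : ℕ) :
    Tendsto (fun i => psiTerm r ν0 ν (u i) (x i) k) l
      (𝓝 ((-z) ^ k / (k.factorial * Real.Gamma ((ν0 : ℝ) + 1 + k) *
        ∏ l, Real.Gamma ((ν l : ℝ) + 1 + k)))) := by
  have hlim := (tendsto_pow_mul_hyp1F1T hx hxu k ((ν0 : ℝ) + 1)).const_mul
    ((k.factorial * Real.Gamma ((ν0 : ℝ) + 1) * ∏ l, Real.Gamma ((ν l : ℝ) + 1 + k))⁻¹)
  rw [← poch_mul_Gamma (by positivity) k]
  simp only [psiTerm, one_div, Finset.prod_inv_distrib]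
  convert hlim using 2 <;> ring

theorem tendsto_Psi_G1R (hx : Tendsto x l (𝓝 0))
    (hxu : Tendsto (fun i => x i * u i) l (𝓝 z)) :
    Tendsto (fun i => Psi r ν0 ν (u i) (x i)) l (𝓝 (G1R r ν0 ν z)) := by
  have hlim : Tendsto (fun i => |x i| * (1 + |u i|)) l (𝓝 |z|) := by
    simpa [mul_add, abs_mul] using hx.abs.add hxu.abs
  exact tendsto_Psi_of_tendsto_psiTerm (hlim.eventually_le_const (lt_add_one |z|))
    (tendsto_psiTerm r ν0 ν hx hxu)

end PsiSeries

section CriticalWeight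

open Asymptotics

lemma tendsto_sqrt_natCast_atTop : Tendsto (fun N : ℕ => √(N : ℝ)) atTop atTop :=
  Real.tendsto_sqrt_atTop.comp tendsto_natCast_atTop_atTop

lemma tendsto_const_div_sqrt_natCast (a : ℝ) :
    Tendsto (fun N : ℕ => a / √(N : ℝ)) atTop (𝓝 0) :=
  tendsto_sqrt_natCast_atTop.const_div_atTop a

lemma tendsto_one_sub_div_sqrt_natCast_inv (τ : ℝ) :
    Tendsto (fun N : ℕ => (1 - τ / √(N : ℝ))⁻¹) atTop (𝓝 1) := by
  simpa using ((tendsto_const_div_sqrt_natCast τ).const_sub 1).inv₀ (by simp)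

lemma one_add_mul_exp_neg_isLittleO :
    (fun y : ℝ => (1 + y) * Real.exp (-y) - 1 + y ^ 2 / 2) =o[𝓝 0] fun y => y ^ 2 := by
  have hexp : (fun y : ℝ => Real.exp (-y) - (1 - y + y ^ 2 / 2)) =o[𝓝 0] fun y => y ^ 2 := by
    have hneg : Tendsto (fun y : ℝ => -y) (𝓝 0) (𝓝 0) := by simpa using tendsto_neg (0 : ℝ)
    simpa [Function.comp_def, Finset.sum_range_succ, sub_eq_add_neg] using
      (Real.exp_sub_sum_range_succ_isLittleO_pow 2).comp_tendsto hneg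
  have hmul : (fun y : ℝ => (1 + y) * (Real.exp (-y) - (1 - y + y ^ 2 / 2))) =o[𝓝 0]
      fun y => y ^ 2 := by
    have hone : (fun y : ℝ => 1 + y) =O[𝓝 0] fun _ => (1 : ℝ) :=
      (Continuous.tendsto (by fun_prop : Continuous fun y : ℝ => 1 + y) 0).isBigO_one ℝ
    simpa using hone.mul_isLittleO hexp
  have hcube : (fun y : ℝ => y ^ 3 / 2) =o[𝓝 0] fun y => y ^ 2 := by
    simpa [div_eq_inv_mul] using
      (isLittleO_pow_pow (𝕜 := ℝ) (by norm_num : 2 < 3)).const_mul_left (2⁻¹ : ℝ)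
  exact (hmul.add hcube).congr_left fun y => by ring

theorem tendsto_one_add_pow_sub_mul_exp_neg {y : ℕ → ℝ} {t : ℝ}
    (hy : Tendsto (fun N : ℕ => √(N : ℝ) * y N) atTop (𝓝 t)) (m : ℕ) :
    Tendsto (fun N : ℕ => (1 + y N) ^ (N - m) * Real.exp (-(N * y N))) atTop
      (𝓝 (Real.exp (-(t ^ 2 / 2)))) := by
  have hy0 : Tendsto y atTop (𝓝 0) := by
    have h := (tendsto_const_div_sqrt_natCast 1).mul hy
    rw [zero_mul] at h
    refine h.congr' ?_
    filter_upwards [tendsto_sqrt_natCast_atTop.eventually_ne_atTop 0] with N hN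
    field_simp
  have hsq : Tendsto (fun N : ℕ => (N : ℝ) * y N ^ 2) atTop (𝓝 (t ^ 2)) :=
    (hy.pow 2).congr fun N => by rw [mul_pow, Real.sq_sqrt N.cast_nonneg]
  have hrem : Tendsto (fun N : ℕ => (N : ℝ) * ((1 + y N) * Real.exp (-y N) - 1 + y N ^ 2 / 2))
      atTop (𝓝 0) :=
    (isLittleO_one_iff ℝ).mp <| ((isBigO_refl (fun N : ℕ => (N : ℝ)) atTop).mul_isLittleO
      (one_add_mul_exp_neg_isLittleO.comp_tendsto hy0)).trans_isBigO (hsq.isBigO_one ℝ)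
  have hpow := Real.tendsto_one_add_pow_exp_of_tendsto
    (g := fun N => (1 + y N) * Real.exp (-y N) - 1) (t := -(t ^ 2 / 2)) <| by
      simpa using (hrem.sub (hsq.div_const 2)).congr fun N => by ring
  have hbase : Tendsto (fun N => 1 + y N) atTop (𝓝 1) := by simpa using hy0.const_add 1
  have hlim := hpow.div (hbase.pow m) (by simp)
  rw [one_pow, div_one] at hlim
  refine hlim.congr' ?_
  filter_upwards [hbase.eventually_ne one_ne_zero, eventually_ge_atTop m] with N hN hmN
  rw [Pi.div_apply, add_sub_cancel, mul_pow, ← Real.exp_nat_mul, mul_neg, pow_sub₀ _ hN hmN]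
  ring

/-- The factor `e^{-u} (u + a_N)^{N-m}` of the integrand of `D_N`, evaluated at `u = √N s` and
normalized by `N^{-(N-m)} e^{-√N τ - τ²/2}`, so that it converges to `e^{-τs - s²/2}`. -/
def criticalWeight (m : ℕ) (τ : ℝ) (N : ℕ) (s : ℝ) : ℝ :=
  Real.exp (-√(N : ℝ) * (τ + s) - τ ^ 2 / 2) * ((1 - τ / √(N : ℝ))⁻¹ + s / √(N : ℝ)) ^ (N - m)

lemma sq_mul_inv_one_sub_div {S τ : ℝ} (hS : S ≠ 0) (hτ : 1 - τ / S ≠ 0) :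
    S ^ 2 * (1 - τ / S)⁻¹ = S ^ 2 + S * τ + τ ^ 2 * (1 - τ / S)⁻¹ := by
  have hSτ : S * (1 - τ / S) = S - τ := by field_simp
  linear_combination (S + τ) * (S * mul_inv_cancel₀ hτ - (1 - τ / S)⁻¹ * hSτ)

theorem tendsto_criticalWeight (m : ℕ) (τ s : ℝ) :
    Tendsto (fun N => criticalWeight m τ N s) atTop (𝓝 (Real.exp (-τ * s - s ^ 2 / 2))) := by
  have hinv := tendsto_one_sub_div_sqrt_natCast_inv τ
  have hne := (hinv.eventually_ne one_ne_zero).and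
    (tendsto_sqrt_natCast_atTop.eventually_ne_atTop 0)
  set y : ℕ → ℝ := fun N => (1 - τ / √(N : ℝ))⁻¹ + s / √(N : ℝ) - 1 with hy
  have hNy : ∀ᶠ N : ℕ in atTop,
      N * y N = √(N : ℝ) * (τ + s) + τ ^ 2 * (1 - τ / √(N : ℝ))⁻¹ := by
    filter_upwards [hne] with N ⟨hτ, hS⟩
    have hinv_eq := sq_mul_inv_one_sub_div hS (inv_eq_zero.not.mp hτ)
    have hs : √(N : ℝ) * (s / √(N : ℝ)) = s := mul_div_cancel₀ s hS
    rw [← Real.sq_sqrt N.cast_nonneg, Real.sqrt_sq (Real.sqrt_nonneg _)]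
    linear_combination hinv_eq + √(N : ℝ) * hs
  have hsqrt : Tendsto (fun N : ℕ => √(N : ℝ) * y N) atTop (𝓝 (τ + s)) := by
    have h := ((tendsto_const_div_sqrt_natCast (τ ^ 2)).mul hinv).const_add (τ + s)
    rw [zero_mul, add_zero] at h
    refine h.congr' ?_
    filter_upwards [hNy, hne] with N hN ⟨_, hS⟩
    apply mul_left_cancel₀ hS
    rw [← mul_assoc, Real.mul_self_sqrt N.cast_nonneg, hN]
    field_simp
  have hlim := (tendsto_one_add_pow_sub_mul_exp_neg hsqrt m).mul
    ((hinv.const_mul (τ ^ 2)).sub_const (τ ^ 2 / 2)).rexp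
  rw [← Real.exp_add] at hlim
  convert hlim.congr' ?_ using 2
  · ring_nf
  filter_upwards [hNy] with N hN
  rw [hN, mul_assoc, ← Real.exp_add, criticalWeight, mul_comm, hy]
  ring_nf

lemma le_exp_sub_one_add_div {a : ℝ} (ha : -1 < a) (z : ℝ) :
    z ≤ Real.exp (a - 1 + z / (1 + a)) := by
  have ha' : 0 < 1 + a := by linarith
  calc z = (1 + a) * (z / (1 + a)) := by field_simp
    _ ≤ (1 + a) * Real.exp (z / (1 + a) - 1) := by
        gcongr
        linarith [Real.add_one_le_exp (z / (1 + a) - 1)]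
    _ ≤ Real.exp a * Real.exp (z / (1 + a) - 1) := by
        gcongr
        linarith [Real.add_one_le_exp a]
    _ = Real.exp (a - 1 + z / (1 + a)) := by rw [← Real.exp_add]; ring_nf

lemma pow_sub_le_exp {a z : ℝ} (ha : 0 ≤ a) (hz : 0 ≤ z) (N m : ℕ) :
    z ^ (N - m) ≤ Real.exp (N * (a - 1 + z / (1 + a)) + m) := by
  set E := a - 1 + z / (1 + a)
  have hE1 : 0 ≤ E + 1 := by linarith [div_nonneg hz (add_nonneg zero_le_one ha)]
  have hsub : ((N - m : ℕ) : ℝ) ≤ N := by exact_mod_cast N.sub_le m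
  have hadd : (N : ℝ) ≤ (N - m : ℕ) + m := by exact_mod_cast le_tsub_add
  calc z ^ (N - m) ≤ Real.exp E ^ (N - m) := by
        gcongr
        exact le_exp_sub_one_add_div (by linarith) z
    _ = Real.exp ((N - m : ℕ) * E) := (Real.exp_nat_mul _ _).symm
    _ ≤ Real.exp (N * E + m) := by
        gcongr
        linarith [mul_nonneg (sub_nonneg.mpr hsub) hE1]

lemma sq_mul_tangent_exponent {S τ L : ℝ} (hS : 0 < S) (hL : 0 ≤ L) (hτ : 1 - τ / S ≠ 0) (s : ℝ) :
    S ^ 2 * (L / S - 1 + ((1 - τ / S)⁻¹ + s / S) / (1 + L / S)) =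
      S * (τ + s) + 1 / (1 + L / S) * (L ^ 2 - L * (τ + s) + τ ^ 2 * (1 - τ / S)⁻¹) := by
  have hinv_eq := sq_mul_inv_one_sub_div hS.ne' hτ
  set q := (1 - τ / S)⁻¹
  set ρ := 1 / (1 + L / S) with hρ
  have hSρ : S * ρ = S - L * ρ := by rw [hρ]; field_simp; ring
  calc S ^ 2 * (L / S - 1 + (q + s / S) / (1 + L / S))
      = S * L - S ^ 2 + ρ * (S ^ 2 * q + S * s) := by rw [hρ]; field_simp
    _ = S * (τ + s) + ρ * (L ^ 2 - L * (τ + s) + τ ^ 2 * q) := by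
        rw [hinv_eq]
        linear_combination (S - L + τ + s) * hSρ

lemma criticalWeight_le {m N : ℕ} {τ L s : ℝ} (hL : 0 ≤ L) (hN : 0 < √(N : ℝ))
    (hLN : L ≤ √(N : ℝ)) (hτ : 0 < (1 - τ / √(N : ℝ))⁻¹) (hτ2 : (1 - τ / √(N : ℝ))⁻¹ ≤ 2)
    (hs : 0 ≤ s) :
    criticalWeight m τ N s ≤ Real.exp (L ^ 2 + L * |τ| + 2 * τ ^ 2 + m - L / 2 * s) := by
  have hexponent := sq_mul_tangent_exponent hN hL (inv_pos.mp hτ).ne' s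
  have hN2 : (N : ℝ) = √(N : ℝ) ^ 2 := (Real.sq_sqrt N.cast_nonneg).symm
  rw [criticalWeight]
  set S := √(N : ℝ)
  set q := (1 - τ / S)⁻¹
  set ρ := 1 / (1 + L / S)
  have hρ1 : ρ ≤ 1 := div_le_one_of_le₀ (by linarith [div_nonneg hL hN.le]) (by positivity)
  have hρ2 : 1 / 2 ≤ ρ := one_div_le_one_div_of_le (by positivity)
    (by linarith [div_le_one_of_le₀ hLN hN.le])
  calc Real.exp (-S * (τ + s) - τ ^ 2 / 2) * (q + s / S) ^ (N - m)
      ≤ Real.exp (-S * (τ + s) - τ ^ 2 / 2) *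
          Real.exp (N * (L / S - 1 + (q + s / S) / (1 + L / S)) + m) := by
        gcongr
        exact pow_sub_le_exp (by positivity) (by positivity) N m
    _ = Real.exp (ρ * (L ^ 2 + τ ^ 2 * q) - ρ * (L * τ) - τ ^ 2 / 2 + m - ρ * (L * s)) := by
        rw [hN2, hexponent, ← Real.exp_add]
        ring_nf
    _ ≤ Real.exp (L ^ 2 + L * |τ| + 2 * τ ^ 2 + m - L / 2 * s) := by
        have hquad : ρ * (L ^ 2 + τ ^ 2 * q) ≤ 1 * (L ^ 2 + τ ^ 2 * 2) := by gcongr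
        have hlin : -(ρ * (L * τ)) ≤ L * |τ| := by
          calc -(ρ * (L * τ)) ≤ |ρ * (L * τ)| := neg_le_abs _
            _ = ρ * (L * |τ|) := by
                rw [abs_mul, abs_mul, abs_of_nonneg hL, abs_of_pos (by linarith)]
            _ ≤ 1 * (L * |τ|) := by gcongr
            _ = L * |τ| := one_mul _
        have hdecay : 1 / 2 * (L * s) ≤ ρ * (L * s) :=
          mul_le_mul_of_nonneg_right hρ2 (mul_nonneg hL hs)
        exact Real.exp_le_exp.mpr (by linarith [sq_nonneg τ])

lemma exists_eventually_criticalWeight_le (m : ℕ) (τ B : ℝ) :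
    ∃ C, 0 ≤ C ∧ ∀ᶠ N : ℕ in atTop, ∀ s, 0 ≤ s →
      0 ≤ criticalWeight m τ N s ∧ criticalWeight m τ N s ≤ C * Real.exp (-(B * s)) := by
  set L := 2 * |B| with hL
  refine ⟨Real.exp (L ^ 2 + L * |τ| + 2 * τ ^ 2 + m), (Real.exp_pos _).le, ?_⟩
  have hinv := tendsto_one_sub_div_sqrt_natCast_inv τ
  filter_upwards [tendsto_sqrt_natCast_atTop.eventually_gt_atTop 0,
    tendsto_sqrt_natCast_atTop.eventually_ge_atTop L, hinv.eventually_const_lt one_pos,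
    hinv.eventually_le_const one_lt_two] with N hN hLN hτ hτ2 s hs
  refine ⟨by unfold criticalWeight; positivity,
    (criticalWeight_le (by positivity) hN hLN hτ hτ2 hs).trans ?_⟩
  rw [← Real.exp_add, sub_eq_add_neg]
  gcongr
  rw [hL, mul_div_cancel_left₀ _ two_ne_zero]
  exact le_abs_self B

theorem tendsto_integral_criticalWeight_mul (m : ℕ) (τ : ℝ) {g : ℕ → ℝ → ℝ} {G : ℝ → ℝ} {C B : ℝ}
    (hmeas : ∀ N, Measurable (g N))
    (hbound : ∀ᶠ N in atTop, ∀ s, 0 < s → |g N s| ≤ C * Real.exp (B * s))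
    (hlim : ∀ s, 0 < s → Tendsto (fun N => g N s) atTop (𝓝 (G s))) :
    Tendsto (fun N => ∫ s in Set.Ioi (0 : ℝ), criticalWeight m τ N s * g N s) atTop
      (𝓝 (∫ s in Set.Ioi (0 : ℝ), Real.exp (-τ * s - s ^ 2 / 2) * G s)) := by
  obtain ⟨K, hK, hweight⟩ := exists_eventually_criticalWeight_le m τ (B + 1)
  refine tendsto_integral_filter_of_dominated_convergence (fun s => K * C * Real.exp (-s))
    (.of_forall fun N => Measurable.aestronglyMeasurable ?_) ?_
    ((integrableOn_exp_neg_Ioi 0).const_mul (K * C)) ?_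
  · have hcont : Continuous (criticalWeight m τ N) := by
      unfold criticalWeight
      fun_prop
    exact hcont.measurable.mul (hmeas N)
  · filter_upwards [hweight, hbound] with N hw hg
    filter_upwards [ae_restrict_mem measurableSet_Ioi] with s hs
    obtain ⟨hw0, hwle⟩ := hw s (Set.mem_Ioi.mp hs).le
    rw [norm_mul, Real.norm_of_nonneg hw0, Real.norm_eq_abs]
    calc criticalWeight m τ N s * |g N s|
        ≤ K * Real.exp (-((B + 1) * s)) * (C * Real.exp (B * s)) := by
          gcongr
          exact hg s hs
      _ = K * C * (Real.exp (-((B + 1) * s)) * Real.exp (B * s)) := by ring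
      _ = K * C * Real.exp (-s) := by rw [← Real.exp_add]; ring_nf
  · filter_upwards [ae_restrict_mem measurableSet_Ioi] with s hs
    exact (tendsto_criticalWeight m τ s).mul (hlim s hs)

end CriticalWeight

section AverageCharpoly

lemma pow_le_exp_natCast_mul {s : ℝ} (hs : 0 ≤ s) (n : ℕ) : s ^ n ≤ Real.exp (n * s) := by
  rw [Real.exp_nat_mul]
  gcongr
  linarith [Real.add_one_le_exp s]

lemma abs_prod_add_le {ι : Type*} (t : Finset ι) (σ : ι → ℝ) {s : ℝ} (hs : 0 ≤ s) :
    |∏ j ∈ t, (s + σ j)| ≤ (∏ j ∈ t, (1 + |σ j|)) * Real.exp (t.card * s) := by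
  rw [Finset.abs_prod, Real.exp_nat_mul, ← Finset.prod_const, ← Finset.prod_mul_distrib]
  refine Finset.prod_le_prod (fun _ _ => abs_nonneg _) fun j _ => ?_
  calc |s + σ j| ≤ s + |σ j| := (abs_add_le _ _).trans_eq (by rw [abs_of_nonneg hs])
    _ ≤ (1 + |σ j|) * (s + 1) := by nlinarith [abs_nonneg (σ j)]
    _ ≤ (1 + |σ j|) * Real.exp s := by gcongr; exact Real.add_one_le_exp s

variable (r ν0 m : ℕ) (ν : Fin r → ℕ) (τ : ℝ) (σ : ℕ → ℝ) (ξ : ℝ)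

/-- The integrand of `D_N` as a function of `u`. -/
def charpolyIntegrand (N : ℕ) (u : ℝ) : ℝ :=
  u ^ ν0 * Real.exp (-u) * Psi r ν0 ν u (ξ / √(N : ℝ)) *
    (u + (N : ℝ) * (1 - τ / √(N : ℝ))⁻¹) ^ (N - m) * ∏ j ∈ Finset.range m, (u + √(N : ℝ) * σ j)

/-- The factors of the integrand of `D_N` other than `e^{-u} (u + a_N)^{N-m}`, evaluated at
`u = √N s` and divided by `√N^{ν₀+m}`. -/
def slowFactor (N : ℕ) (s : ℝ) : ℝ :=
  s ^ ν0 * Psi r ν0 ν (√(N : ℝ) * s) (ξ / √(N : ℝ)) * ∏ j ∈ Finset.range m, (s + σ j)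

lemma measurable_slowFactor (N : ℕ) : Measurable (slowFactor r ν0 m ν σ ξ N) := by
  have := continuous_Psi r ν0 ν (ξ / √(N : ℝ))
  unfold slowFactor
  fun_prop

lemma abs_slowFactor_le {N : ℕ} (hN : 1 ≤ √(N : ℝ)) {s : ℝ} (hs : 0 ≤ s) :
    |slowFactor r ν0 m ν σ ξ N s| ≤ Real.exp |ξ| * (∏ j ∈ Finset.range m, (1 + |σ j|)) *
      Real.exp ((ν0 + |ξ| + m) * s) := by
  have hpow := pow_le_exp_natCast_mul hs ν0
  have hprod := abs_prod_add_le (Finset.range m) σ hs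
  have hPsi : |Psi r ν0 ν (√(N : ℝ) * s) (ξ / √(N : ℝ))| ≤ Real.exp (|ξ| + |ξ| * s) := by
    refine (abs_Psi_le _ _ _ _ _).trans ?_
    have hcancel : |ξ| / √(N : ℝ) * (√(N : ℝ) * s) = |ξ| * s := by field_simp
    rw [abs_div, abs_mul, abs_of_nonneg (Real.sqrt_nonneg _), abs_of_nonneg hs, mul_add, mul_one,
      hcancel]
    gcongr
    exact div_le_self (abs_nonneg ξ) hN
  rw [Finset.card_range] at hprod
  rw [slowFactor, abs_mul, abs_mul, abs_of_nonneg (pow_nonneg hs ν0)]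
  calc _ ≤ Real.exp (ν0 * s) * Real.exp (|ξ| + |ξ| * s) *
        ((∏ j ∈ Finset.range m, (1 + |σ j|)) * Real.exp (m * s)) := by gcongr
    _ = _ := by
      rw [add_mul, add_mul, Real.exp_add, Real.exp_add, Real.exp_add]
      ring

lemma tendsto_slowFactor (s : ℝ) :
    Tendsto (fun N => slowFactor r ν0 m ν σ ξ N s) atTop
      (𝓝 (s ^ ν0 * G1R r ν0 ν (ξ * s) * ∏ j ∈ Finset.range m, (s + σ j))) := by
  refine ((tendsto_Psi_G1R r ν0 ν (tendsto_const_div_sqrt_natCast ξ) ?_).const_mul _).mul_const _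
  refine tendsto_const_nhds.congr' ?_
  filter_upwards [tendsto_sqrt_natCast_atTop.eventually_ne_atTop 0] with N hN
  field_simp

lemma charpolyIntegrand_sqrt_mul (N : ℕ) (s : ℝ) :
    Real.exp (-√(N : ℝ) * τ - τ ^ 2 / 2) *
        charpolyIntegrand r ν0 m ν τ σ ξ N (√(N : ℝ) * s) =
      √(N : ℝ) ^ (ν0 + m) * (N : ℝ) ^ (N - m) *
        (criticalWeight m τ N s * slowFactor r ν0 m ν σ ξ N s) := by
  have hprod : ∏ j ∈ Finset.range m, (√(N : ℝ) * s + √(N : ℝ) * σ j) =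
      √(N : ℝ) ^ m * ∏ j ∈ Finset.range m, (s + σ j) := by
    simp only [← mul_add, Finset.prod_mul_distrib, Finset.prod_const, Finset.card_range]
  have hbase : √(N : ℝ) * s + N * (1 - τ / √(N : ℝ))⁻¹ =
      N * ((1 - τ / √(N : ℝ))⁻¹ + s / √(N : ℝ)) := by
    rw [mul_add, mul_div_left_comm, Real.div_sqrt]
    ring
  have hexp : Real.exp (-√(N : ℝ) * (τ + s) - τ ^ 2 / 2) =
      Real.exp (-√(N : ℝ) * τ - τ ^ 2 / 2) * Real.exp (-(√(N : ℝ) * s)) := by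
    rw [← Real.exp_add]
    ring_nf
  rw [charpolyIntegrand, criticalWeight, slowFactor, hprod, hbase, hexp, mul_pow (N : ℝ)]
  ring

lemma rpow_mul_sqrt_pow_mul_pow_eq_one {N : ℕ} (hN : 0 < N) (hmN : m ≤ N) :
    (N : ℝ) ^ (-(N : ℝ) - ((ν0 : ℝ) - m + 1) / 2) *
      (√(N : ℝ) ^ (ν0 + m + 1) * (N : ℝ) ^ (N - m)) = 1 := by
  have hN0 : (0 : ℝ) < N := by exact_mod_cast hN
  rw [← Real.rpow_natCast, ← Real.rpow_natCast, Real.sqrt_eq_rpow, ← Real.rpow_mul hN0.le,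
    ← Real.rpow_add hN0, ← Real.rpow_add hN0, Nat.cast_sub hmN]
  convert Real.rpow_zero (N : ℝ) using 2
  push_cast
  ring

lemma normalized_integral_charpolyIntegrand {N : ℕ} (hN : 0 < N) (hmN : m ≤ N) :
    (N : ℝ) ^ (-(N : ℝ) - ((ν0 : ℝ) - m + 1) / 2) * Real.exp (-√(N : ℝ) * τ - τ ^ 2 / 2) *
        ∫ u in Set.Ioi (0 : ℝ), charpolyIntegrand r ν0 m ν τ σ ξ N u =
      ∫ s in Set.Ioi (0 : ℝ), criticalWeight m τ N s * slowFactor r ν0 m ν σ ξ N s := by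
  have hsubst := integral_comp_mul_left_Ioi' (charpolyIntegrand r ν0 m ν τ σ ξ N) 0
    (b := √(N : ℝ)) (by positivity)
  rw [mul_zero, smul_eq_mul] at hsubst
  have hscale : Real.exp (-√(N : ℝ) * τ - τ ^ 2 / 2) *
        ∫ s in Set.Ioi (0 : ℝ), charpolyIntegrand r ν0 m ν τ σ ξ N (√(N : ℝ) * s) =
      √(N : ℝ) ^ (ν0 + m) * (N : ℝ) ^ (N - m) *
        ∫ s in Set.Ioi (0 : ℝ), criticalWeight m τ N s * slowFactor r ν0 m ν σ ξ N s := by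
    simp only [← integral_const_mul, charpolyIntegrand_sqrt_mul r ν0 m ν τ σ ξ N]
  have hone := rpow_mul_sqrt_pow_mul_pow_eq_one ν0 m hN hmN
  rw [← hsubst, mul_assoc, mul_left_comm (Real.exp _), hscale]
  linear_combination hone *
    ∫ s in Set.Ioi (0 : ℝ), criticalWeight m τ N s * slowFactor r ν0 m ν σ ξ N s

theorem thm_3_6_ii_charpoly_general :
    Tendsto
      (fun N : ℕ =>
        (N : ℝ) ^ (-(N : ℝ) - ((ν0 : ℝ) - m + 1) / 2) *
          Real.exp (-√(N : ℝ) * τ - τ ^ 2 / 2) *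
          ∫ u in Set.Ioi (0 : ℝ), charpolyIntegrand r ν0 m ν τ σ ξ N u)
      atTop
      (𝓝 (∫ u in Set.Ioi (0 : ℝ),
        u ^ ν0 * Real.exp (-τ * u - u ^ 2 / 2) * G1R r ν0 ν (ξ * u) *
          ∏ j ∈ Finset.range m, (u + σ j))) := by
  have hlim := tendsto_integral_criticalWeight_mul m τ (measurable_slowFactor r ν0 m ν σ ξ)
    ((tendsto_sqrt_natCast_atTop.eventually_ge_atTop 1).mono fun N hN s hs =>
      abs_slowFactor_le r ν0 m ν σ ξ hN hs.le)
    fun s _ => tendsto_slowFactor r ν0 m ν σ ξ s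
  convert hlim.congr' ?_ using 4 with u
  · ring
  filter_upwards [eventually_gt_atTop 0, eventually_ge_atTop m] with N hN hmN
  exact (normalized_integral_charpolyIntegrand r ν0 m ν τ σ ξ hN hmN).symm

end AverageCharpoly

/-- **Theorem 3.6(ii), characteristic-polynomial part** (critical-regime asymptotics of
the average characteristic polynomial, with the normalization written out). -/
theorem thm_3_6_ii_charpoly (r ν0 m : ℕ) (ν : Fin r → ℕ) (τ : ℝ)
    (σ : ℕ → ℝ) (hσ : ∀ j < m, 0 < σ j) (ξ : ℝ) (hξ : 0 < ξ)
    (D : ℕ → ℝ)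
    (hD : ∀ N : ℕ, D N = ∫ u in Set.Ioi (0 : ℝ),
      u ^ ν0 * Real.exp (-u) * Psi r ν0 ν u (ξ / Real.sqrt N) *
        (u + (N : ℝ) * (1 - τ / Real.sqrt N)⁻¹) ^ (N - m) *
        ∏ j ∈ Finset.range m, (u + Real.sqrt N * σ j)) :
    Tendsto
      (fun N : ℕ =>
        (N : ℝ) ^ (-(N : ℝ) - ((ν0 : ℝ) - m + 1) / 2) *
          Real.exp (-Real.sqrt N * τ - τ ^ 2 / 2) * D N)
      atTop
      (𝓝 (∫ u in Set.Ioi (0 : ℝ),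
        u ^ ν0 * Real.exp (-τ * u - u ^ 2 / 2) * G1R r ν0 ν (ξ * u) *
          ∏ j ∈ Finset.range m, (u + σ j))) := by
  obtain rfl : D = fun N => ∫ u in Set.Ioi (0 : ℝ), charpolyIntegrand r ν0 m ν τ σ ξ N u :=
    funext hD
  exact thm_3_6_ii_charpoly_general r ν0 m ν τ σ ξ

end
end
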